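/- arXiv:2508.03887 — 2 statements merged into one kernel-verified Lean document; each statement's English description precedes it below -/
import Mathlib

section
/- Let n > 1, let K, L ⊆ ℝⁿ be nonempty closed convex sets whose cross covariogram g = g_{K,L} satisfies 0 < g(a) < ∞, and let a, w ∈ ℝⁿ with w ≠ 0. If g(a + tw) = g(a) > 0 for all t ∈ [−1,1], then there exists a vector v ∈ ℝⁿ such that, for all t ∈ [−1,1], K ∩ (L + a + tw) = K' ∩ (L' + tw), where K' := {x + sv : x ∈ K, s ∈ ℝ} is the cylinder in the direction v generated by K, and L' := {x + s(v−w) : x ∈ L + a, s ∈ ℝ} is the cylinder in the direction v−w generated by L + a. -/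
open MeasureTheory Set Pointwise

/-!
The sets `M t = K ∩ (L + a + t w)` are the fibres of a closed convex subset of `ℝ × E`, so
`M 0 ⊇ (M 1 + M (-1)) / 2`. As all fibres have the same volume, this is a case of equality in the
Brunn–Minkowski inequality; hence `M 1` is a translate of `M (-1)`, and, comparing volumes again,
`M t = M 0 + t v` for a fixed vector `v`.

For the equality case, push the bodies forward under a linear functional and normalize. The laws
`α`, `β`, `γ` of the two bodies and of `M 0` again satisfy Brunn–Minkowski, so at a midpoint
`(x + y) / 2` the distribution function of `γ` lies within `O((s - t) ^ 2)` of `(s + t) / 2`, where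
`s` and `t` are the levels of `x` for `α` and of `y` for `β`. Comparing the midpoints obtained from
the quantiles at `s` and `t` in the two possible orders shows that the difference of the quantile
functions of `α` and `β` has derivative zero. Hence these laws differ by a shift, which is the
functional evaluated at the difference of the centroids, and a compact convex set is determined by
its images under linear functionals.

Finally, `q ± v ∈ K` for every `q ∈ M 0`, so a point `y` of the cylinder over `K` is approached
from `q` inside `K`: some `(1 - ε) q + ε y` lies in `K`. Applied to `K` and `L + a` at once, with
the same `ε`, and iterated, this puts every point common to both cylinders in `M 0`.
-/

open Filter Topology ProbabilityTheory
open scoped ENNReal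

theorem volume_add_volume_le_volume_add_of_isCompact {A B : Set ℝ} (hA : IsCompact A)
    (hB : IsCompact B) (hA0 : A.Nonempty) (hB0 : B.Nonempty) :
    volume A + volume B ≤ volume (A + B) := by
  obtain ⟨a, ha, ha_max⟩ := hA.exists_isGreatest hA0
  obtain ⟨b, hb, hb_min⟩ := hB.exists_isLeast hB0
  have hsub : (b +ᵥ A) ∪ (a +ᵥ B) ⊆ A + B := by
    rintro _ (⟨x, hx, rfl⟩ | ⟨y, hy, rfl⟩)
    · exact ⟨x, hx, b, hb, add_comm x b⟩
    · exact ⟨a, ha, y, hy, rfl⟩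
  have hdisj : AEDisjoint volume (b +ᵥ A) (a +ᵥ B) := by
    refine measure_mono_null (t := {a + b}) ?_ (measure_singleton _)
    rintro _ ⟨⟨x, hx, rfl⟩, y, hy, hyx⟩
    have hxa := ha_max hx
    have hby := hb_min hy
    simp only [vadd_eq_add, mem_singleton_iff] at hyx ⊢
    linarith
  calc volume A + volume B = volume (b +ᵥ A) + volume (a +ᵥ B) := by simp only [measure_vadd]
    _ = volume ((b +ᵥ A) ∪ (a +ᵥ B)) :=
      (measure_union₀ (hB.vadd a).measurableSet.nullMeasurableSet hdisj).symm
    _ ≤ volume (A + B) := measure_mono hsub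

theorem volume_add_volume_le_volume_add {A B : Set ℝ} (hA : MeasurableSet A)
    (hB : MeasurableSet B) (hA0 : A.Nonempty) (hB0 : B.Nonempty) :
    volume A + volume B ≤ volume (A + B) := by
  obtain ⟨a, ha⟩ := hA0
  obtain ⟨b, hb⟩ := hB0
  rw [hA.measure_eq_iSup_isCompact, hB.measure_eq_iSup_isCompact]
  simp only [iSup_and']
  refine ENNReal.biSup_add_biSup_le' ⟨∅, empty_subset _, isCompact_empty⟩
    ⟨∅, empty_subset _, isCompact_empty⟩ ?_
  rintro S ⟨hSA, hS⟩ T ⟨hTB, hT⟩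
  calc volume S + volume T ≤ volume (insert a S) + volume (insert b T) := by
        gcongr <;> exact subset_insert _ _
    _ ≤ volume (insert a S + insert b T) := volume_add_volume_le_volume_add_of_isCompact
        (hS.insert a) (hT.insert b) (insert_nonempty _ _) (insert_nonempty _ _)
    _ ≤ volume (A + B) :=
        measure_mono (add_subset_add (insert_subset ha hSA) (insert_subset hb hTB))

theorem ofReal_mul_volume_add_le {a b : ℝ} (ha : 0 < a) (hb : 0 < b) {A B C : Set ℝ}
    (hA : MeasurableSet A) (hB : MeasurableSet B) (hA0 : A.Nonempty) (hB0 : B.Nonempty)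
    (hC : ∀ x ∈ A, ∀ y ∈ B, a * x + b * y ∈ C) :
    ENNReal.ofReal a * volume A + ENNReal.ofReal b * volume B ≤ volume C := by
  have hsub : a • A + b • B ⊆ C := by
    rintro _ ⟨_, ⟨x, hx, rfl⟩, _, ⟨y, hy, rfl⟩, rfl⟩
    exact hC x hx y hy
  calc ENNReal.ofReal a * volume A + ENNReal.ofReal b * volume B
      = volume (a • A) + volume (b • B) := by
        simp [Measure.addHaar_smul, abs_of_pos ha, abs_of_pos hb]
    _ ≤ volume (a • A + b • B) := volume_add_volume_le_volume_add
        (hA.const_smul_of_ne_zero ha.ne') (hB.const_smul_of_ne_zero hb.ne')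
        hA0.smul_set hB0.smul_set
    _ ≤ volume C := measure_mono hsub

theorem lintegral_eq_lintegral_Ioi_measure_ofReal_lt {α : Type*} [MeasurableSpace α]
    (μ : Measure α) [SFinite μ] {f : α → ℝ≥0∞} (hf : Measurable f) :
    ∫⁻ x, f x ∂μ = ∫⁻ t in Ioi (0 : ℝ), μ {x | ENNReal.ofReal t < f x} := by
  have hslice (c : ℝ≥0∞) : volume.restrict (Ioi (0 : ℝ)) {t | ENNReal.ofReal t < c} = c := by
    rw [Measure.restrict_apply (measurableSet_lt (by fun_prop) measurable_const)]
    rcases eq_or_ne c ∞ with rfl | hc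
    · simp
    · have : {t : ℝ | ENNReal.ofReal t < c} ∩ Ioi 0 = Ioo 0 c.toReal := by
        ext t
        simp only [mem_inter_iff, mem_ofPred_eq, mem_Ioi, mem_Ioo, and_comm (a := 0 < t)]
        exact and_congr_left fun ht => ENNReal.ofReal_lt_iff_lt_toReal ht.le hc
      rw [this, Real.volume_Ioo, sub_zero, ENNReal.ofReal_toReal hc]
  have hmeas : MeasurableSet {z : α × ℝ | ENNReal.ofReal z.2 < f z.1} :=
    measurableSet_lt (by fun_prop) (by fun_prop)
  calc ∫⁻ x, f x ∂μ = ∫⁻ x, volume.restrict (Ioi (0 : ℝ)) {t | ENNReal.ofReal t < f x} ∂μ := by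
        simp only [hslice]
    _ = (μ.prod (volume.restrict (Ioi 0))) {z | ENNReal.ofReal z.2 < f z.1} :=
        (Measure.prod_apply hmeas).symm
    _ = ∫⁻ t in Ioi (0 : ℝ), μ {x | ENNReal.ofReal t < f x} := Measure.prod_apply_symm hmeas

theorem tendsto_lintegral_min_natCast {α : Type*} [MeasurableSpace α] (μ : Measure α)
    {f : α → ℝ≥0∞} (hf : Measurable f) :
    Tendsto (fun N : ℕ => ∫⁻ x, min (f x) N ∂μ) atTop (𝓝 (∫⁻ x, f x ∂μ)) := by
  refine lintegral_tendsto_of_tendsto_of_monotone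
    (fun N => (hf.min measurable_const).aemeasurable)
    (ae_of_all _ fun x N M hNM => min_le_min_left _ (by exact_mod_cast hNM))
    (ae_of_all _ fun x => ?_)
  simpa using (tendsto_const_nhds (x := f x)).min ENNReal.tendsto_nat_nhds_top

theorem ennreal_geom_mean_le_arith_mean {a b : ℝ} (ha : 0 < a) (hb : 0 < b) (hab : a + b = 1)
    (x y : ℝ≥0∞) : x ^ a * y ^ b ≤ ENNReal.ofReal a * x + ENNReal.ofReal b * y := by
  have hconj : a⁻¹.HolderConjugate b⁻¹ := by
    rw [Real.holderConjugate_iff]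
    exact ⟨one_lt_inv₀ ha |>.2 (by linarith), by simpa using hab⟩
  have h := ENNReal.young_inequality (x ^ a) (y ^ b) hconj
  rwa [ENNReal.rpow_rpow_inv ha.ne', ENNReal.rpow_rpow_inv hb.ne', ENNReal.ofReal_inv_of_pos ha,
    ENNReal.ofReal_inv_of_pos hb, div_eq_mul_inv, div_eq_mul_inv, inv_inv, inv_inv, mul_comm x,
    mul_comm y] at h

/-- The Prékopa–Leindler inequality with weights `a` and `b`, as a property of a measure. -/
def PrekopaLeindler {E : Type*} [AddCommGroup E] [Module ℝ E] [MeasurableSpace E]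
    (μ : Measure E) (a b : ℝ) : Prop :=
  ∀ ⦃f g h : E → ℝ≥0∞⦄, Measurable f → Measurable g → Measurable h →
    (∀ x y, f x ^ a * g y ^ b ≤ h (a • x + b • y)) →
    (∫⁻ x, f x ∂μ) ^ a * (∫⁻ x, g x ∂μ) ^ b ≤ ∫⁻ x, h x ∂μ

namespace PrekopaLeindler

variable {a b : ℝ}

theorem ofReal_mul_lintegral_add_le_of_iSup_eq (ha : 0 < a) (hb : 0 < b) (hab : a + b = 1)
    {f g h : ℝ → ℝ≥0∞} (hf : Measurable f) (hg : Measurable g) (hh : Measurable h)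
    (hsup : ⨆ x, f x = ⨆ x, g x) (H : ∀ x y, f x ^ a * g y ^ b ≤ h (a * x + b * y)) :
    ENNReal.ofReal a * (∫⁻ x, f x) + ENNReal.ofReal b * ∫⁻ x, g x ≤ ∫⁻ x, h x := by
  have hmeas (k : ℝ → ℝ≥0∞) : Measurable fun t : ℝ => volume {x | ENNReal.ofReal t < k x} :=
    Antitone.measurable fun s t hst => measure_mono fun x hx =>
      (ENNReal.ofReal_le_ofReal hst).trans_lt hx
  have hlevel (t : ℝ) :
      ENNReal.ofReal a * volume {x | ENNReal.ofReal t < f x} +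
        ENNReal.ofReal b * volume {x | ENNReal.ofReal t < g x} ≤
      volume {x | ENNReal.ofReal t < h x} := by
    by_cases htop : ENNReal.ofReal t < ⨆ x, f x
    · refine ofReal_mul_volume_add_le ha hb (measurableSet_lt measurable_const hf)
        (measurableSet_lt measurable_const hg) (lt_iSup_iff.1 htop)
        (lt_iSup_iff.1 (htop.trans_eq hsup)) fun x hx y hy => ?_
      calc ENNReal.ofReal t = ENNReal.ofReal t ^ a * ENNReal.ofReal t ^ b := by
            rw [← ENNReal.rpow_add_of_nonneg _ _ ha.le hb.le, hab, ENNReal.rpow_one]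
        _ < f x ^ a * g y ^ b :=
            ENNReal.mul_lt_mul (ENNReal.rpow_lt_rpow hx ha) (ENNReal.rpow_lt_rpow hy hb)
        _ ≤ h (a * x + b * y) := H x y
    · have hf_le (x : ℝ) : ¬ENNReal.ofReal t < f x :=
        fun hx => htop (hx.trans_le (le_iSup f x))
      have hg_le (x : ℝ) : ¬ENNReal.ofReal t < g x :=
        fun hx => htop (hsup ▸ hx.trans_le (le_iSup g x))
      simp [hf_le, hg_le]
  simp only [lintegral_eq_lintegral_Ioi_measure_ofReal_lt volume, hf, hg, hh]
  rw [← lintegral_const_mul _ (hmeas f), ← lintegral_const_mul _ (hmeas g),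
    ← lintegral_add_left ((hmeas f).const_mul _)]
  exact lintegral_mono hlevel

theorem lintegral_rpow_mul_le_of_iSup_ne_top (ha : 0 < a) (hb : 0 < b) (hab : a + b = 1)
    {f g h : ℝ → ℝ≥0∞} (hf : Measurable f) (hg : Measurable g) (hh : Measurable h)
    (hf_top : ⨆ x, f x ≠ ∞) (hg_top : ⨆ x, g x ≠ ∞)
    (H : ∀ x y, f x ^ a * g y ^ b ≤ h (a * x + b * y)) :
    (∫⁻ x, f x) ^ a * (∫⁻ x, g x) ^ b ≤ ∫⁻ x, h x := by
  rcases eq_or_ne (⨆ x, f x) 0 with hf0 | hf0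
  · simp [ENNReal.iSup_eq_zero.1 hf0, ha]
  rcases eq_or_ne (⨆ x, g x) 0 with hg0 | hg0
  · simp [ENNReal.iSup_eq_zero.1 hg0, hb]
  -- rescaling `g` by `c` makes the two suprema equal and multiplies both sides by `c ^ b`
  set c := (⨆ x, f x) / ⨆ x, g x
  have hc0 : c ^ b ≠ 0 := by simp [c, hb, hb.not_gt, hf0, hg_top]
  have hc_top : c ^ b ≠ ∞ := ENNReal.rpow_ne_top_of_nonneg hb.le (ENNReal.div_ne_top hf_top hg0)
  refine (ENNReal.mul_le_mul_iff_right hc0 hc_top).1 ?_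
  calc c ^ b * ((∫⁻ x, f x) ^ a * (∫⁻ x, g x) ^ b)
      = (∫⁻ x, f x) ^ a * (∫⁻ x, c * g x) ^ b := by
        rw [lintegral_const_mul _ hg, ENNReal.mul_rpow_of_nonneg _ _ hb.le]
        ring
    _ ≤ ENNReal.ofReal a * (∫⁻ x, f x) + ENNReal.ofReal b * ∫⁻ x, c * g x :=
        ennreal_geom_mean_le_arith_mean ha hb hab _ _
    _ ≤ ∫⁻ x, c ^ b * h x := by
        refine ofReal_mul_lintegral_add_le_of_iSup_eq ha hb hab hf (hg.const_mul c)
          (hh.const_mul _) ?_ fun x y => ?_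
        · rw [← ENNReal.mul_iSup, ENNReal.div_mul_cancel hg0 hg_top]
        · rw [ENNReal.mul_rpow_of_nonneg _ _ hb.le, mul_left_comm]
          gcongr
          exact H x y
    _ = c ^ b * ∫⁻ x, h x := lintegral_const_mul _ hh

protected theorem real (ha : 0 < a) (hb : 0 < b) (hab : a + b = 1) :
    PrekopaLeindler (volume : Measure ℝ) a b := by
  intro f g h hf hg hh H
  rcases eq_or_ne (∫⁻ x, f x) 0 with hf0 | hf0
  · simp [hf0, ha]
  rcases eq_or_ne (∫⁻ x, g x) 0 with hg0 | hg0
  · simp [hg0, hb]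
  have hlim : Tendsto (fun N : ℕ => (∫⁻ x, min (f x) N) ^ a * (∫⁻ x, min (g x) N) ^ b) atTop
      (𝓝 ((∫⁻ x, f x) ^ a * (∫⁻ x, g x) ^ b)) :=
    ENNReal.Tendsto.mul ((tendsto_lintegral_min_natCast volume hf).ennrpow_const a)
      (Or.inl (by simp [ENNReal.rpow_eq_zero_iff, hf0, ha.not_gt]))
      ((tendsto_lintegral_min_natCast volume hg).ennrpow_const b)
      (Or.inl (by simp [ENNReal.rpow_eq_zero_iff, hg0, hb.not_gt]))
  refine le_of_tendsto' hlim fun N => ?_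
  have hbdd (k : ℝ → ℝ≥0∞) : ⨆ x, min (k x) N ≠ ∞ :=
    ((iSup_le fun x => min_le_right _ _).trans_lt (ENNReal.natCast_lt_top N)).ne
  refine lintegral_rpow_mul_le_of_iSup_ne_top ha hb hab (hf.min measurable_const)
    (hg.min measurable_const) hh (hbdd f) (hbdd g) fun x y => le_trans ?_ (H x y)
  gcongr <;> exact min_le_left _ _

section Constructions

variable {E F : Type*} [AddCommGroup E] [Module ℝ E] [MeasurableSpace E]
  [AddCommGroup F] [Module ℝ F] [MeasurableSpace F] {μ : Measure E} {ν : Measure F}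

protected theorem prod [SFinite μ] [SFinite ν] (hμ : PrekopaLeindler μ a b)
    (hν : PrekopaLeindler ν a b) : PrekopaLeindler (μ.prod ν) a b := by
  intro f g h hf hg hh H
  rw [lintegral_prod _ hf.aemeasurable, lintegral_prod _ hg.aemeasurable,
    lintegral_prod _ hh.aemeasurable]
  refine hμ hf.lintegral_prod_right' hg.lintegral_prod_right' hh.lintegral_prod_right'
    fun x y => ?_
  exact hν (hf.comp measurable_prodMk_left) (hg.comp measurable_prodMk_left)
    (hh.comp measurable_prodMk_left) fun x' y' => H (x, x') (y, y')

theorem of_measurePreserving (hμ : PrekopaLeindler μ a b) (e : E →ₗ[ℝ] F)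
    (he : MeasurePreserving e μ ν) : PrekopaLeindler ν a b := by
  intro f g h hf hg hh H
  rw [← he.lintegral_comp hf, ← he.lintegral_comp hg, ← he.lintegral_comp hh]
  refine hμ (hf.comp he.measurable) (hg.comp he.measurable) (hh.comp he.measurable)
    fun x y => ?_
  simpa only [Function.comp_apply, map_add, map_smul] using H (e x) (e y)

protected theorem smul (hμ : PrekopaLeindler μ a b) (ha : 0 ≤ a) (hb : 0 ≤ b) (hab : a + b = 1)
    (c : ℝ≥0∞) : PrekopaLeindler (c • μ) a b := by
  intro f g h hf hg hh H
  simp only [lintegral_smul_measure, smul_eq_mul]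
  calc (c * ∫⁻ x, f x ∂μ) ^ a * (c * ∫⁻ x, g x ∂μ) ^ b
      = c * ((∫⁻ x, f x ∂μ) ^ a * (∫⁻ x, g x ∂μ) ^ b) := by
        rw [ENNReal.mul_rpow_of_nonneg _ _ ha, ENNReal.mul_rpow_of_nonneg _ _ hb,
          mul_mul_mul_comm, ← ENNReal.rpow_add_of_nonneg _ _ ha hb, hab, ENNReal.rpow_one]
    _ ≤ c * ∫⁻ x, h x ∂μ := by
        gcongr
        exact hμ hf hg hh H

end Constructions

protected theorem pi (ha : 0 < a) (hb : 0 < b) (hab : a + b = 1) (n : ℕ) :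
    PrekopaLeindler (volume : Measure (Fin n → ℝ)) a b := by
  induction n with
  | zero =>
    intro f g h _ _ _ H
    have hpoint := H default default
    rw [Subsingleton.elim (a • _ + b • _) (default : Fin 0 → ℝ)] at hpoint
    simpa [Measure.volume_pi_eq_dirac (default : Fin 0 → ℝ)] using hpoint
  | succ n ih =>
    let e := Fin.consLinearEquiv ℝ fun _ : Fin (n + 1) => ℝ
    have he : ⇑e = (MeasurableEquiv.piFinSuccAbove (fun _ => ℝ) 0).symm := by
      ext x i
      simp [e, MeasurableEquiv.piFinSuccAbove]
    refine ((PrekopaLeindler.real ha hb hab).prod ih).of_measurePreserving e.toLinearMap ?_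
    rw [LinearEquiv.coe_coe, he]
    exact (volume_preserving_piFinSuccAbove (fun _ => ℝ) 0).symm

variable {E : Type*} [NormedAddCommGroup E] [NormedSpace ℝ E] [FiniteDimensional ℝ E]
  [MeasurableSpace E] [BorelSpace E] (μ : Measure E) [μ.IsAddHaarMeasure]

protected theorem addHaar (ha : 0 < a) (hb : 0 < b) (hab : a + b = 1) :
    PrekopaLeindler μ a b := by
  let e := (Module.finBasis ℝ E).equivFunL.symm
  have he : MeasurePreserving e volume (volume.map e) :=
    ⟨e.continuous.measurable, rfl⟩
  have : (volume.map e).IsAddHaarMeasure := e.isAddHaarMeasure_map volume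
  rw [Measure.isAddLeftInvariant_eq_smul μ (volume.map e)]
  exact ((PrekopaLeindler.pi ha hb hab _).of_measurePreserving e.toLinearMap he).smul
    ha.le hb.le hab _

end PrekopaLeindler

/-- The multiplicative Brunn–Minkowski inequality with weights `a` and `b`, as a property of three
measures: `α S ^ a * β T ^ b ≤ γ U` whenever `a • S + b • T ⊆ U`. -/
def BrunnMinkowski {E : Type*} [AddCommGroup E] [Module ℝ E] [MeasurableSpace E] (a b : ℝ)
    (α β γ : Measure E) : Prop :=
  ∀ ⦃S T U : Set E⦄, MeasurableSet S → MeasurableSet T → MeasurableSet U →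
    (∀ x ∈ S, ∀ y ∈ T, a • x + b • y ∈ U) → α S ^ a * β T ^ b ≤ γ U

/-- Log-concavity of a measure: the multiplicative Brunn–Minkowski inequality for all weights. -/
def LogConcave {E : Type*} [AddCommGroup E] [Module ℝ E] [MeasurableSpace E] (μ : Measure E) :
    Prop :=
  ∀ ⦃a b : ℝ⦄, 0 < a → 0 < b → a + b = 1 → BrunnMinkowski a b μ μ μ

theorem PrekopaLeindler.brunnMinkowski {E : Type*} [AddCommGroup E] [Module ℝ E]
    [MeasurableSpace E] {μ : Measure E} {a b : ℝ} (hμ : PrekopaLeindler μ a b) (ha : 0 < a)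
    (hb : 0 < b) : BrunnMinkowski a b μ μ μ := by
  intro S T U hS hT hU h
  simpa only [lintegral_indicator_one, hS, hT, hU] using
    hμ (measurable_one.indicator hS) (measurable_one.indicator hT) (measurable_one.indicator hU)
      fun x y => by
      by_cases hx : x ∈ S
      · by_cases hy : y ∈ T
        · simp [hx, hy, h x hx y hy]
        · simp [hy, hb]
      · simp [hx, ha]

theorem LogConcave.addHaar {E : Type*} [NormedAddCommGroup E] [NormedSpace ℝ E]
    [FiniteDimensional ℝ E] [MeasurableSpace E] [BorelSpace E] (μ : Measure E)
    [μ.IsAddHaarMeasure] : LogConcave μ := fun _ _ ha hb hab =>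
  (PrekopaLeindler.addHaar μ ha hb hab).brunnMinkowski ha hb

namespace BrunnMinkowski

variable {E F : Type*} [AddCommGroup E] [Module ℝ E] [MeasurableSpace E] [AddCommGroup F]
  [Module ℝ F] [MeasurableSpace F] {α β γ : Measure E} {a b : ℝ}

protected theorem map (h : BrunnMinkowski a b α β γ) (e : E →ₗ[ℝ] F) (he : Measurable e) :
    BrunnMinkowski a b (α.map e) (β.map e) (γ.map e) := by
  intro S T U hS hT hU hSTU
  rw [Measure.map_apply he hS, Measure.map_apply he hT, Measure.map_apply he hU]
  refine h (he hS) (he hT) (he hU) fun x hx y hy => ?_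
  simpa only [mem_preimage, map_add, map_smul] using hSTU _ hx _ hy

protected theorem cond (h : BrunnMinkowski a b α β γ) (ha : 0 < a) (hb : 0 < b) {A B D : Set E}
    (hA : MeasurableSet A) (hB : MeasurableSet B) (hD : MeasurableSet D)
    (hABD : ∀ x ∈ A, ∀ y ∈ B, a • x + b • y ∈ D) (hA0 : α A ≠ 0) (hB0 : β B ≠ 0)
    (hDAB : γ D ≤ α A ^ a * β B ^ b) : BrunnMinkowski a b α[|A] β[|B] γ[|D] := by
  intro S T U hS hT hU hSTU
  have hle : α (A ∩ S) ^ a * β (B ∩ T) ^ b ≤ γ (D ∩ U) :=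
    h (hA.inter hS) (hB.inter hT) (hD.inter hU) fun x hx y hy =>
      ⟨hABD x hx.1 y hy.1, hSTU x hx.2 y hy.2⟩
  have hinv : (α A ^ a * β B ^ b)⁻¹ = (α A)⁻¹ ^ a * (β B)⁻¹ ^ b := by
    rw [ENNReal.mul_inv (.inl (by simp [hA0, ha.not_gt])) (.inr (by simp [hB0, hb.not_gt])),
      ENNReal.inv_rpow, ENNReal.inv_rpow]
  rw [cond_apply hA, cond_apply hB, cond_apply hD, ENNReal.mul_rpow_of_nonneg _ _ ha.le,
    ENNReal.mul_rpow_of_nonneg _ _ hb.le, mul_mul_mul_comm, ← hinv]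
  gcongr

theorem measureReal_rpow_mul_le [IsFiniteMeasure γ] (h : BrunnMinkowski a b α β γ) {S T U : Set E}
    (hS : MeasurableSet S) (hT : MeasurableSet T) (hU : MeasurableSet U)
    (hSTU : ∀ x ∈ S, ∀ y ∈ T, a • x + b • y ∈ U) :
    α.real S ^ a * β.real T ^ b ≤ γ.real U := by
  simp only [measureReal_def]
  rw [ENNReal.toReal_rpow, ENNReal.toReal_rpow, ← ENNReal.toReal_mul]
  exact ENNReal.toReal_mono (measure_ne_top _ _) (h hS hT hU hSTU)

end BrunnMinkowski

namespace LogConcave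

variable {E F : Type*} [AddCommGroup E] [Module ℝ E] [MeasurableSpace E] [AddCommGroup F]
  [Module ℝ F] [MeasurableSpace F] {μ : Measure E}

protected theorem map (hμ : LogConcave μ) (e : E →ₗ[ℝ] F) (he : Measurable e) :
    LogConcave (μ.map e) := fun _ _ ha hb hab => (hμ ha hb hab).map e he

protected theorem cond (hμ : LogConcave μ) {A : Set E} (hA : MeasurableSet A)
    (hconv : Convex ℝ A) (h0 : μ A ≠ 0) : LogConcave μ[|A] := fun a b ha hb hab => by
  refine (hμ ha hb hab).cond ha hb hA hA hA (fun x hx y hy => hconv hx hy ha.le hb.le hab) h0 h0 ?_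
  rw [← ENNReal.rpow_add_of_nonneg _ _ ha.le hb.le, hab, ENNReal.rpow_one]

end LogConcave

theorem ball_midpoint_subset_of_convex {E : Type*} [NormedAddCommGroup E] [NormedSpace ℝ E]
    {s : Set E} (hs : Convex ℝ s) {p x : E} {r : ℝ} (hball : Metric.ball p r ⊆ s) (hx : x ∈ s) :
    Metric.ball (midpoint ℝ p x) (r / 2) ⊆ s := by
  intro y hy
  have hdiff : y - midpoint ℝ p x = (2⁻¹ : ℝ) • ((2 : ℝ) • y - x - p) := by
    rw [midpoint_eq_smul_add, invOf_eq_inv]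
    module
  have hp : (2 : ℝ) • y - x ∈ Metric.ball p r := by
    rw [mem_ball_iff_norm, hdiff, norm_smul, norm_inv, Real.norm_ofNat] at hy
    rw [mem_ball_iff_norm]
    linarith
  have hy_eq : midpoint ℝ ((2 : ℝ) • y - x) x = y := by
    rw [midpoint_eq_smul_add, invOf_eq_inv]
    module
  exact hy_eq ▸ hs.midpoint_mem (hball hp) hx

section ConvexSets

variable {E : Type*} [NormedAddCommGroup E] [NormedSpace ℝ E] [FiniteDimensional ℝ E]
  [MeasurableSpace E] [BorelSpace E] (μ : Measure E) [μ.IsAddHaarMeasure] {s t O : Set E}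

theorem interior_nonempty_of_convex_of_measure_ne_zero (hs : Convex ℝ s) (h0 : μ s ≠ 0) :
    (interior s).Nonempty := by
  by_contra! h
  refine h0 (measure_mono_null ?_ (hs.addHaar_frontier μ))
  rw [frontier, h, sdiff_empty]
  exact subset_closure

theorem measure_convex_inter_isOpen_ne_zero (hs : Convex ℝ s) (h0 : μ s ≠ 0) (hO : IsOpen O)
    (hne : (s ∩ O).Nonempty) : μ (s ∩ O) ≠ 0 := by
  obtain ⟨x, hxs, hxO⟩ := hne
  have hx : x ∈ closure (interior s) := by
    rw [hs.closure_interior_eq_closure_of_nonempty_interior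
      (interior_nonempty_of_convex_of_measure_ne_zero μ hs h0)]
    exact subset_closure hxs
  obtain ⟨y, hyO, hys⟩ := mem_closure_iff.1 hx O hO hxO
  have hpos : 0 < μ (interior s ∩ O) := (isOpen_interior.inter hO).measure_pos μ ⟨y, hys, hyO⟩
  exact (hpos.trans_le (measure_mono (inter_subset_inter_left _ interior_subset))).ne'

theorem eq_of_subset_convex_of_measure_eq (ht : IsClosed t) (hs : Convex ℝ s) (hts : t ⊆ s)
    (h : μ t = μ s) (h0 : μ s ≠ 0) (hfin : μ s ≠ ∞) : t = s := by
  refine hts.antisymm fun x hxs => ?_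
  by_contra hxt
  refine measure_convex_inter_isOpen_ne_zero μ hs h0 ht.isOpen_compl ⟨x, hxs, hxt⟩ ?_
  rw [← sdiff_eq, measure_sdiff hts ht.measurableSet.nullMeasurableSet (h ▸ hfin), h, tsub_self]

theorem isBounded_of_convex_of_measure_ne_top (hs : Convex ℝ s) (h0 : μ s ≠ 0)
    (hfin : μ s ≠ ∞) : Bornology.IsBounded s := by
  obtain ⟨p, hp⟩ := interior_nonempty_of_convex_of_measure_ne_zero μ hs h0
  obtain ⟨r, hr, hball⟩ := Metric.isOpen_iff.1 isOpen_interior p hp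
  by_contra hunbdd
  obtain ⟨x, hxs, hx_sep⟩ : ∃ x : ℕ → E, (∀ k, x k ∈ s) ∧
      Pairwise fun j k => 2 * r ≤ dist (x j) (x k) := by
    have : Std.Symm fun x y : E => 2 * r ≤ dist x y := ⟨fun x y h => dist_comm x y ▸ h⟩
    refine exists_seq_of_forall_finset_exists' (· ∈ s) (fun x y => 2 * r ≤ dist x y)
      fun S _ => ?_
    by_contra! hS
    refine hunbdd (((Bornology.isBounded_biUnion_finset S).2 fun y _ =>
      Metric.isBounded_ball (x := y) (r := 2 * r)).subset fun z hz => ?_)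
    obtain ⟨y, hy, hyz⟩ := hS z hz
    exact mem_biUnion hy (Metric.mem_ball'.2 hyz)
  let B (k : ℕ) := Metric.ball (midpoint ℝ p (x k)) (r / 2)
  have hB_disj : Pairwise (Function.onFun Disjoint B) := fun j k hjk => by
    have hdist : dist (midpoint ℝ p (x j)) (midpoint ℝ p (x k)) = dist (x j) (x k) / 2 := by
      simp [dist_eq_norm, midpoint_eq_smul_add, ← smul_sub, norm_smul, div_eq_inv_mul]
    refine Metric.ball_disjoint_ball ?_
    linarith [hx_sep hjk]
  have hB_sub : ⋃ k, B k ⊆ s := iUnion_subset fun k =>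
    ball_midpoint_subset_of_convex hs (hball.trans interior_subset) (hxs k)
  refine hfin (measure_mono_top hB_sub ?_)
  rw [measure_iUnion hB_disj fun k => measurableSet_ball]
  simp only [B, Measure.addHaar_ball_center]
  exact ENNReal.tsum_const_eq_top_of_ne_zero (Metric.measure_ball_pos μ 0 (half_pos hr)).ne'

end ConvexSets

section Cdf

variable {α β γ : Measure ℝ} [IsProbabilityMeasure α] [IsProbabilityMeasure β]
  [IsProbabilityMeasure γ] {a b η : ℝ}

theorem continuous_cdf (ν : Measure ℝ) [IsProbabilityMeasure ν] [NullSingletonClass ν] :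
    Continuous (cdf ν) := by
  refine continuous_iff_continuousAt.2 fun x => ?_
  have hmono := monotone_cdf ν
  have hjump := (cdf ν).measure_singleton x
  rw [measure_cdf, measure_singleton, eq_comm, ENNReal.ofReal_eq_zero] at hjump
  rw [hmono.continuousAt_iff_leftLim_eq_rightLim, StieltjesFunction.rightLim_eq]
  exact le_antisymm (hmono.leftLim_le le_rfl) (by linarith)

theorem Ioo_subset_range_cdf (ν : Measure ℝ) [IsProbabilityMeasure ν] [NullSingletonClass ν] :
    Ioo 0 1 ⊆ range (cdf ν) := fun p hp => by
  obtain ⟨x, hx⟩ := ((tendsto_cdf_atBot ν).eventually_lt_const hp.1).exists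
  obtain ⟨y, hy⟩ := ((tendsto_cdf_atTop ν).eventually_const_lt hp.2).exists
  exact mem_range_of_exists_le_of_exists_ge (continuous_cdf ν) ⟨x, hx.le⟩ ⟨y, hy.le⟩

theorem one_sub_cdf (ν : Measure ℝ) [IsProbabilityMeasure ν] (x : ℝ) :
    1 - cdf ν x = ν.real (Ioi x) := by
  rw [cdf_eq_real, ← compl_Iic, probReal_compl_eq_one_sub measurableSet_Iic]

theorem cdf_rpow_mul_cdf_rpow_le (h : BrunnMinkowski a b α β γ) (ha : 0 ≤ a) (hb : 0 ≤ b)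
    (x y : ℝ) : cdf α x ^ a * cdf β y ^ b ≤ cdf γ (a * x + b * y) := by
  simp only [cdf_eq_real]
  refine h.measureReal_rpow_mul_le measurableSet_Iic measurableSet_Iic measurableSet_Iic
    fun s hs t ht => ?_
  exact add_le_add (mul_le_mul_of_nonneg_left hs ha) (mul_le_mul_of_nonneg_left ht hb)

theorem one_sub_cdf_rpow_mul_le (h : BrunnMinkowski a b α β γ) (ha : 0 < a) (hb : 0 < b)
    (x y : ℝ) : (1 - cdf α x) ^ a * (1 - cdf β y) ^ b ≤ 1 - cdf γ (a * x + b * y) := by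
  simp only [one_sub_cdf]
  refine h.measureReal_rpow_mul_le measurableSet_Ioi measurableSet_Ioi measurableSet_Ioi
    fun s hs t ht => ?_
  exact add_lt_add (mul_lt_mul_of_pos_left hs ha) (mul_lt_mul_of_pos_left ht hb)

theorem add_mul_mul_sub_le_rpow_mul_rpow {z m : ℝ} (hz : 0 < z) (hzm : z ≤ m) (hm : m ≤ 1)
    (hb : 0 ≤ b) (hab : a + b = 1) : z + b * (z * (m - z)) ≤ z ^ a * m ^ b := by
  have hm0 : 0 < m := hz.trans_le hzm
  have hlog : m - z ≤ Real.log (m / z) :=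
    calc m - z ≤ (m - z) / m := le_div_self (sub_nonneg.2 hzm) hm0 hm
      _ = 1 - (m / z)⁻¹ := by field_simp
      _ ≤ Real.log (m / z) := Real.one_sub_inv_le_log_of_pos (div_pos hm0 hz)
  calc z + b * (z * (m - z)) = z * (b * (m - z) + 1) := by ring
    _ ≤ z * (b * Real.log (m / z) + 1) := by gcongr
    _ ≤ z * Real.exp (b * Real.log (m / z)) := by
        gcongr
        exact Real.add_one_le_exp _
    _ = z ^ a * m ^ b := by
        rw [mul_comm b, ← Real.rpow_def_of_pos (div_pos hm0 hz), Real.div_rpow hm0.le hz.le,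
          eq_sub_of_add_eq hab, Real.rpow_sub hz, Real.rpow_one]
        ring

theorem exists_pos_mul_abs_sub_le_abs_cdf_sub (hγ : LogConcave γ) (hη : 0 < η) :
    ∃ c > 0, ∀ x y, cdf γ x ∈ Icc η (1 - η) → cdf γ y ∈ Icc η (1 - η) →
      c * |x - y| ≤ |cdf γ x - cdf γ y| := by
  have hmono := monotone_cdf γ
  obtain ⟨S, hS⟩ := ((tendsto_cdf_atBot γ).eventually_lt_const hη).exists
  obtain ⟨T, hT, hST⟩ := (((tendsto_cdf_atTop γ).eventually_const_lt
    (show 1 - η / 2 < 1 by linarith)).and (eventually_gt_atTop S)).exists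
  have := sub_pos.2 hST
  refine ⟨η * (η / 2) / (T - S), by positivity, fun x y hx hy => ?_⟩
  wlog hxy : x < y generalizing x y
  · rcases (not_lt.1 hxy).eq_or_lt with rfl | hyx
    · simp
    · rw [abs_sub_comm, abs_sub_comm (cdf γ x)]
      exact this y x hy hx hyx
  have hSx : S < x := hmono.reflect_lt (hS.trans_le hx.1)
  have hyT : y < T := hmono.reflect_lt (hy.2.trans_lt (by linarith))
  have hTx : 0 < T - x := by linarith
  set b := (y - x) / (T - x)
  have hb0 : 0 < b := div_pos (sub_pos.2 hxy) hTx
  have hb1 : b < 1 := (div_lt_one hTx).2 (by linarith)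
  have hy_eq : (1 - b) * x + b * T = y := by
    simp only [b]
    field_simp
    ring
  have hgrow : cdf γ x + b * (η * (η / 2)) ≤ cdf γ y :=
    calc cdf γ x + b * (η * (η / 2)) ≤ cdf γ x + b * (cdf γ x * (cdf γ T - cdf γ x)) := by
          gcongr
          exacts [cdf_nonneg γ x, hx.1, by linarith [hx.2]]
      _ ≤ cdf γ x ^ (1 - b) * cdf γ T ^ b := add_mul_mul_sub_le_rpow_mul_rpow
          (hη.trans_le hx.1) (hmono (by linarith)) (cdf_le_one γ T) hb0.le (sub_add_cancel 1 b)
      _ ≤ cdf γ y := hy_eq ▸ cdf_rpow_mul_cdf_rpow_le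
          (hγ (sub_pos.2 hb1) hb0 (sub_add_cancel 1 b)) (sub_pos.2 hb1).le hb0.le x T
  rw [abs_sub_comm, abs_sub_comm (cdf γ x), abs_of_pos (sub_pos.2 hxy)]
  refine le_trans ?_ ((le_sub_iff_add_le'.2 hgrow).trans (le_abs_self _))
  calc η * (η / 2) / (T - S) * (y - x) ≤ η * (η / 2) / (T - x) * (y - x) := by gcongr
    _ = b * (η * (η / 2)) := by simp only [b]; ring

theorem abs_sub_midpoint_le {s t p : ℝ} (hη : 0 < η) (hs : s ∈ Icc η (1 - η))
    (ht : t ∈ Icc η (1 - η)) (h : √s * √t ≤ p) (h' : √(1 - s) * √(1 - t) ≤ 1 - p) :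
    p ∈ Icc η (1 - η) ∧ |p - (s + t) / 2| ≤ (s - t) ^ 2 / (8 * η) := by
  obtain ⟨hs1, hs2⟩ := hs
  obtain ⟨ht1, ht2⟩ := ht
  have hp0 : 0 ≤ p := (by positivity : 0 ≤ √s * √t).trans h
  have hp1 : 0 ≤ 1 - p := (by positivity : 0 ≤ √(1 - s) * √(1 - t)).trans h'
  have hst : s * t ≤ p ^ 2 := by
    rw [← Real.sqrt_mul (by linarith)] at h
    exact (Real.sqrt_le_left hp0).1 h
  have hst' : (1 - s) * (1 - t) ≤ (1 - p) ^ 2 := by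
    rw [← Real.sqrt_mul (by linarith)] at h'
    exact (Real.sqrt_le_left hp1).1 h'
  have hpη : η ≤ p := le_of_sq_le_sq (by nlinarith) hp0
  have hpη' : η ≤ 1 - p := le_of_sq_le_sq (by nlinarith) hp1
  refine ⟨⟨hpη, by linarith⟩, ?_⟩
  rw [le_div_iff₀ (by positivity), abs_sub_comm]
  rcases le_total p ((s + t) / 2) with hle | hle
  · rw [abs_of_nonneg (by linarith)]
    nlinarith
  · rw [abs_of_nonpos (by linarith)]
    nlinarith

theorem cdf_midpoint_mem_Icc_and_abs_sub_le (h : BrunnMinkowski (1 / 2) (1 / 2) α β γ)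
    (hη : 0 < η) {x y : ℝ} (hx : cdf α x ∈ Icc η (1 - η)) (hy : cdf β y ∈ Icc η (1 - η)) :
    cdf γ (1 / 2 * x + 1 / 2 * y) ∈ Icc η (1 - η) ∧
      |cdf γ (1 / 2 * x + 1 / 2 * y) - (cdf α x + cdf β y) / 2| ≤
        (cdf α x - cdf β y) ^ 2 / (8 * η) := by
  refine abs_sub_midpoint_le hη hx hy ?_ ?_ <;> simp only [Real.sqrt_eq_rpow]
  · exact cdf_rpow_mul_cdf_rpow_le h (by norm_num) (by norm_num) x y
  · exact one_sub_cdf_rpow_mul_le h (by norm_num) (by norm_num) x y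

theorem exists_abs_quantile_sub_le (h : BrunnMinkowski (1 / 2) (1 / 2) α β γ)
    (hγ : LogConcave γ) (hη : 0 < η) :
    ∃ C, ∀ ⦃x y x' y' : ℝ⦄, cdf α x = cdf β y → cdf α x' = cdf β y' →
      cdf α x ∈ Icc η (1 - η) → cdf α x' ∈ Icc η (1 - η) →
      |(x - y) - (x' - y')| ≤ C * (cdf α x - cdf α x') ^ 2 := by
  obtain ⟨c, hc, hcγ⟩ := exists_pos_mul_abs_sub_le_abs_cdf_sub hγ hη
  refine ⟨1 / (2 * η * c), fun x y x' y' hxy hxy' hx hx' => ?_⟩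
  set m := 1 / 2 * x + 1 / 2 * y'
  set m' := 1 / 2 * x' + 1 / 2 * y
  obtain ⟨hm, hmα⟩ := cdf_midpoint_mem_Icc_and_abs_sub_le h hη hx (hxy' ▸ hx')
  obtain ⟨hm', hmα'⟩ := cdf_midpoint_mem_Icc_and_abs_sub_le h hη hx' (hxy ▸ hx)
  rw [← hxy'] at hmα
  rw [← hxy, add_comm (cdf α x'), abs_sub_comm, ← neg_sub (cdf α x), neg_sq] at hmα'
  have hlevel : |cdf γ m - cdf γ m'| ≤ (cdf α x - cdf α x') ^ 2 / (4 * η) :=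
    calc |cdf γ m - cdf γ m'| ≤ _ := abs_sub_le _ ((cdf α x + cdf α x') / 2) _
      _ ≤ (cdf α x - cdf α x') ^ 2 / (8 * η) + (cdf α x - cdf α x') ^ 2 / (8 * η) := by gcongr
      _ = (cdf α x - cdf α x') ^ 2 / (4 * η) := by ring
  calc |(x - y) - (x' - y')| = 2 / c * (c * |m - m'|) := by
        rw [show (x - y) - (x' - y') = 2 * (m - m') by simp only [m, m']; ring, abs_mul, abs_two]
        field_simp
    _ ≤ 2 / c * ((cdf α x - cdf α x') ^ 2 / (4 * η)) := by
        gcongr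
        exact (hcγ m m' hm hm').trans hlevel
    _ = 1 / (2 * η * c) * (cdf α x - cdf α x') ^ 2 := by field_simp; ring

theorem hasDerivAt_zero_of_abs_sub_le_sq {f : ℝ → ℝ} {x₀ C : ℝ}
    (h : ∀ᶠ x in 𝓝 x₀, |f x - f x₀| ≤ C * (x - x₀) ^ 2) : HasDerivAt f 0 x₀ := by
  have hO : (fun x => f x - f x₀) =O[𝓝 x₀] fun x => ‖x - x₀‖ ^ 2 :=
    Asymptotics.IsBigO.of_bound C (by simpa using h)
  simpa using (hO.hasFDerivAt one_lt_two).hasDerivAt.add_const (f x₀)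

theorem exists_eventually_abs_quantile_sub_le (h : BrunnMinkowski (1 / 2) (1 / 2) α β γ)
    (hγ : LogConcave γ) {p x₀ y₀ : ℝ} (hx₀ : cdf α x₀ = p) (hy₀ : cdf β y₀ = p)
    (hp : p ∈ Ioo 0 1) :
    ∃ C, ∀ᶠ q in 𝓝 p, ∀ x y, cdf α x = q → cdf β y = q →
      |(x - y) - (x₀ - y₀)| ≤ C * (q - p) ^ 2 := by
  obtain ⟨η, hη, hlt⟩ := exists_between (lt_min hp.1 (sub_pos.2 hp.2))
  obtain ⟨hηp, hηp'⟩ := lt_min_iff.1 hlt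
  have hmem : p ∈ Ioo η (1 - η) := ⟨hηp, by linarith⟩
  obtain ⟨C, hC⟩ := exists_abs_quantile_sub_le h hγ hη
  refine ⟨C, ?_⟩
  filter_upwards [isOpen_Ioo.mem_nhds hmem] with q hq x y hx hy
  subst hx hx₀
  exact hC hy.symm hy₀.symm (Ioo_subset_Icc_self hq) (Ioo_subset_Icc_self hmem)

theorem exists_eq_add_of_cdf_eq [NullSingletonClass α] [NullSingletonClass β]
    (h : BrunnMinkowski (1 / 2) (1 / 2) α β γ) (hγ : LogConcave γ) :
    ∃ r, ∀ x y, cdf α x = cdf β y → cdf α x ∈ Ioo 0 1 → x = y + r := by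
  have hα : ∀ p ∈ Ioo (0 : ℝ) 1, ∃ x, cdf α x = p := Ioo_subset_range_cdf α
  have hβ : ∀ p ∈ Ioo (0 : ℝ) 1, ∃ y, cdf β y = p := Ioo_subset_range_cdf β
  choose! qα hqα using hα
  choose! qβ hqβ using hβ
  have hderiv (p : ℝ) (hp : p ∈ Ioo (0 : ℝ) 1) : HasDerivAt (fun p => qα p - qβ p) 0 p := by
    obtain ⟨C, hC⟩ := exists_eventually_abs_quantile_sub_le h hγ (hqα p hp) (hqβ p hp) hp
    refine hasDerivAt_zero_of_abs_sub_le_sq (C := C) ?_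
    filter_upwards [hC, isOpen_Ioo.mem_nhds hp] with q hq hq01
    exact hq _ _ (hqα q hq01) (hqβ q hq01)
  obtain ⟨r, hr⟩ := isOpen_Ioo.exists_is_const_of_deriv_eq_zero isPreconnected_Ioo
    (fun p hp => (hderiv p hp).differentiableAt.differentiableWithinAt)
    fun p hp => (hderiv p hp).deriv
  refine ⟨r, fun x y hxy hx => ?_⟩
  obtain ⟨C, hC⟩ := exists_eventually_abs_quantile_sub_le h hγ (hqα _ hx) (hqβ _ hx) hx
  have huniq := hC.self_of_nhds x y rfl hxy.symm
  rw [sub_self, zero_pow two_ne_zero, mul_zero, abs_nonpos_iff] at huniq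
  linarith [hr _ hx]

theorem le_comp_add_of_quantile {F G : ℝ → ℝ} (hF : Monotone F) (hG : Monotone G)
    (hF0 : ∀ x, 0 ≤ F x) (hG1 : ∀ x, G x ≤ 1) (hFr : Ioo 0 1 ⊆ range F) (hGr : Ioo 0 1 ⊆ range G)
    {r : ℝ} (h : ∀ x y, F x = G y → F x ∈ Ioo 0 1 → x = y + r) (s : ℝ) : G s ≤ F (s + r) := by
  by_contra! hlt
  obtain ⟨p, hFp, hpG⟩ := exists_between hlt
  have hp : p ∈ Ioo 0 1 := ⟨(hF0 _).trans_lt hFp, hpG.trans_le (hG1 _)⟩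
  obtain ⟨x, rfl⟩ := hFr hp
  obtain ⟨y, hy⟩ := hGr hp
  have hx_gt : s + r < x := hF.reflect_lt hFp
  have hy_lt : y < s := hG.reflect_lt (hy ▸ hpG)
  linarith [h x y hy.symm hp]

theorem exists_eq_map_add_of_brunnMinkowski [NullSingletonClass α] [NullSingletonClass β]
    (h : BrunnMinkowski (1 / 2) (1 / 2) α β γ) (hγ : LogConcave γ) :
    ∃ r, α = β.map (· + r) := by
  obtain ⟨r, hr⟩ := exists_eq_add_of_cdf_eq h hγ
  have hcdf (s : ℝ) : cdf α (s + r) = cdf β s := by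
    refine le_antisymm ?_ ?_
    · have := le_comp_add_of_quantile (r := -r) (monotone_cdf β) (monotone_cdf α) (cdf_nonneg β)
        (cdf_le_one α) (Ioo_subset_range_cdf β) (Ioo_subset_range_cdf α)
        (fun y x hyx hy => by linarith [hr x y hyx.symm (hyx ▸ hy)]) (s + r)
      rwa [add_neg_cancel_right] at this
    · exact le_comp_add_of_quantile (monotone_cdf α) (monotone_cdf β) (cdf_nonneg α)
        (cdf_le_one β) (Ioo_subset_range_cdf α) (Ioo_subset_range_cdf β) hr s
  have := Measure.isProbabilityMeasure_map (μ := β) (f := (· + r))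
    (measurable_add_const r).aemeasurable
  refine ⟨r, Measure.eq_of_cdf _ _ (StieltjesFunction.ext fun x => ?_)⟩
  rw [← sub_add_cancel x r, hcdf, cdf_eq_real, cdf_eq_real,
    map_measureReal_apply (measurable_add_const r) measurableSet_Iic]
  congr 1
  ext t
  simp

end Cdf

/-- The law of the functional `u` at a uniformly distributed point of `A`. -/
noncomputable def marginal {E : Type*} [NormedAddCommGroup E] [NormedSpace ℝ E]
    [MeasurableSpace E] (μ : Measure E) (A : Set E) (u : E →L[ℝ] ℝ) : Measure ℝ :=
  μ[|A].map u

section Marginal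

variable {E : Type*} [NormedAddCommGroup E] [NormedSpace ℝ E] [MeasurableSpace E]
  [BorelSpace E] {μ : Measure E} {A B D : Set E} {u : E →L[ℝ] ℝ}

theorem isProbabilityMeasure_marginal (h0 : μ A ≠ 0) (hfin : μ A ≠ ∞) :
    IsProbabilityMeasure (marginal μ A u) := by
  have := cond_isProbabilityMeasure_of_finite h0 hfin
  exact Measure.isProbabilityMeasure_map u.continuous.aemeasurable

theorem marginal_eq_zero_iff (hA : MeasurableSet A) (hfin : μ A ≠ ∞) {S : Set ℝ}
    (hS : MeasurableSet S) : marginal μ A u S = 0 ↔ μ (A ∩ u ⁻¹' S) = 0 := by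
  rw [marginal, Measure.map_apply u.continuous.measurable hS, cond_apply hA, mul_eq_zero,
    or_iff_right (ENNReal.inv_ne_zero.2 hfin)]

theorem integral_id_marginal [CompleteSpace E] [IsFiniteMeasureOnCompacts μ] (hA : IsCompact A)
    (h0 : μ A ≠ 0) :
    ∫ t, t ∂marginal μ A u = u (⨍ x in A, x ∂μ) := by
  have hint : Integrable (fun x => x) μ[|A] :=
    (continuous_id.continuousOn.integrableOn_compact hA).smul_measure (ENNReal.inv_ne_top.2 h0)
  rw [marginal, integral_map u.continuous.aemeasurable measurable_id'.aestronglyMeasurable,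
    u.integral_comp_comm hint, setAverage_eq', ProbabilityTheory.cond]

theorem integrable_id_marginal [IsFiniteMeasureOnCompacts μ] (hA : IsCompact A) (h0 : μ A ≠ 0) :
    Integrable (fun t => t) (marginal μ A u) := by
  rw [marginal, integrable_map_measure measurable_id'.aestronglyMeasurable
    u.continuous.aemeasurable]
  exact (u.continuous.continuousOn.integrableOn_compact hA).smul_measure (ENNReal.inv_ne_top.2 h0)

variable [FiniteDimensional ℝ E] [μ.IsAddHaarMeasure]

theorem nullSingletonClass_marginal (hu : u ≠ 0) : NullSingletonClass (marginal μ A u) := by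
  refine ⟨fun s => ?_⟩
  have hsurj : Function.Surjective u.toLinearMap :=
    LinearMap.surjective fun h => hu (ContinuousLinearMap.coe_injective h)
  obtain ⟨c, -, hc⟩ := u.toLinearMap.exists_map_addHaar_eq_smul_addHaar μ volume hsurj
  have hnull : μ (u ⁻¹' {s}) = 0 := by
    have := congrArg (fun ν : Measure ℝ => ν {s}) hc
    simpa [Measure.map_apply u.continuous.measurable (measurableSet_singleton s)] using this
  rw [marginal, Measure.map_apply u.continuous.measurable (measurableSet_singleton s)]
  exact cond_absolutelyContinuous hnull

theorem exists_marginal_eq_map_add (hA : MeasurableSet A) (hB : MeasurableSet B)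
    (hD : MeasurableSet D) (hDc : Convex ℝ D)
    (hABD : ∀ x ∈ A, ∀ y ∈ B, (1 / 2 : ℝ) • x + (1 / 2 : ℝ) • y ∈ D)
    (hA0 : μ A ≠ 0) (hB0 : μ B ≠ 0) (hAfin : μ A ≠ ∞) (hBfin : μ B ≠ ∞)
    (hDAB : μ D ≤ μ A ^ (1 / 2 : ℝ) * μ B ^ (1 / 2 : ℝ)) (hu : u ≠ 0) :
    ∃ r, marginal μ A u = (marginal μ B u).map (· + r) := by
  have hhalf : (0 : ℝ) < 1 / 2 := one_half_pos
  have hBM := LogConcave.addHaar μ hhalf hhalf (add_halves 1)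
  have hD0 : μ D ≠ 0 := by
    refine ne_bot_of_le_ne_bot ?_ (hBM hA hB hD hABD)
    simp [hA0, hB0, hAfin, hBfin]
  have hDfin : μ D ≠ ∞ := ne_top_of_le_ne_top (ENNReal.mul_ne_top
    (ENNReal.rpow_ne_top_of_nonneg hhalf.le hAfin)
    (ENNReal.rpow_ne_top_of_nonneg hhalf.le hBfin)) hDAB
  have := isProbabilityMeasure_marginal (u := u) hA0 hAfin
  have := isProbabilityMeasure_marginal (u := u) hB0 hBfin
  have := isProbabilityMeasure_marginal (u := u) hD0 hDfin
  have := nullSingletonClass_marginal (μ := μ) (A := A) hu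
  have := nullSingletonClass_marginal (μ := μ) (A := B) hu
  have hmeas := u.continuous.measurable
  exact exists_eq_map_add_of_brunnMinkowski (γ := marginal μ D u)
    ((hBM.cond hhalf hhalf hA hB hD hABD hA0 hB0 hDAB).map u.toLinearMap hmeas)
    (((LogConcave.addHaar μ).cond hD hDc hD0).map u.toLinearMap hmeas)

theorem marginal_eq_map_add_apply_sub (hA : IsCompact A) (hB : IsCompact B)
    (hD : MeasurableSet D) (hDc : Convex ℝ D)
    (hABD : ∀ x ∈ A, ∀ y ∈ B, (1 / 2 : ℝ) • x + (1 / 2 : ℝ) • y ∈ D)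
    (hA0 : μ A ≠ 0) (hB0 : μ B ≠ 0) (hDAB : μ D ≤ μ A ^ (1 / 2 : ℝ) * μ B ^ (1 / 2 : ℝ))
    (hu : u ≠ 0) :
    marginal μ A u = (marginal μ B u).map (· + u (⨍ x in A, x ∂μ - ⨍ x in B, x ∂μ)) := by
  obtain ⟨r, hr⟩ := exists_marginal_eq_map_add hA.measurableSet hB.measurableSet hD hDc hABD
    hA0 hB0 hA.measure_ne_top hB.measure_ne_top hDAB hu
  have := isProbabilityMeasure_marginal (u := u) hB0 hB.measure_ne_top
  have hmean : ∫ t, t ∂marginal μ A u = ∫ t, t ∂marginal μ B u + r := by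
    rw [hr, integral_map (measurable_add_const r).aemeasurable
      measurable_id'.aestronglyMeasurable,
      integral_add (integrable_id_marginal hB hB0) (integrable_const r)]
    simp
  have := FiniteDimensional.complete ℝ E
  rw [integral_id_marginal hA hA0, integral_id_marginal hB hB0] at hmean
  rw [map_sub, hmean, add_sub_cancel_left, ← hr]

theorem subset_vadd_of_marginal_eq (hA : MeasurableSet A) (hAc : Convex ℝ A) (hA0 : μ A ≠ 0)
    (hAfin : μ A ≠ ∞) (hB : IsClosed B) (hBc : Convex ℝ B) (hBne : B.Nonempty)
    (hBfin : μ B ≠ ∞) {v : E}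
    (h : ∀ u : E →L[ℝ] ℝ, u ≠ 0 → marginal μ A u = (marginal μ B u).map (· + u v)) :
    A ⊆ v +ᵥ B := by
  intro x hx
  by_contra hxB
  rw [mem_vadd_set_iff_neg_vadd_mem, vadd_eq_add, neg_add_eq_sub] at hxB
  obtain ⟨u, s, hBs, hsx⟩ := geometric_hahn_banach_closed_point hBc hB hxB
  have hu : u ≠ 0 := by
    rintro rfl
    obtain ⟨y, hy⟩ := hBne
    exact (hBs y hy).not_gt hsx
  have hB_null : marginal μ B u (Ioi s) = 0 := by
    rw [marginal_eq_zero_iff hB.measurableSet hBfin measurableSet_Ioi]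
    convert measure_empty (μ := μ)
    exact eq_empty_of_forall_notMem fun y hy => (hBs y hy.1).not_gt hy.2
  have hA_null : marginal μ A u (Ioi (s + u v)) = 0 := by
    rw [h u hu, Measure.map_apply (measurable_add_const _) measurableSet_Ioi]
    simpa using hB_null
  rw [marginal_eq_zero_iff hA hAfin measurableSet_Ioi] at hA_null
  refine measure_convex_inter_isOpen_ne_zero μ hAc hA0 (isOpen_Ioi.preimage u.continuous)
    ⟨x, hx, ?_⟩ hA_null
  rw [map_sub] at hsx
  exact lt_sub_iff_add_lt.1 hsx

/-- The equality case of the Brunn–Minkowski inequality for convex bodies. -/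
theorem exists_eq_vadd_of_measure_le (hA : IsCompact A) (hB : IsCompact B)
    (hAc : Convex ℝ A) (hBc : Convex ℝ B) (hD : MeasurableSet D) (hDc : Convex ℝ D)
    (hABD : ∀ x ∈ A, ∀ y ∈ B, (1 / 2 : ℝ) • x + (1 / 2 : ℝ) • y ∈ D)
    (hA0 : μ A ≠ 0) (hB0 : μ B ≠ 0) (hDAB : μ D ≤ μ A ^ (1 / 2 : ℝ) * μ B ^ (1 / 2 : ℝ)) :
    ∃ v : E, A = v +ᵥ B := by
  let v := ⨍ x in A, x ∂μ - ⨍ x in B, x ∂μ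
  have hmarg (u : E →L[ℝ] ℝ) (hu : u ≠ 0) : marginal μ A u = (marginal μ B u).map (· + u v) :=
    marginal_eq_map_add_apply_sub hA hB hD hDc hABD hA0 hB0 hDAB hu
  have hAB : A ⊆ v +ᵥ B := subset_vadd_of_marginal_eq hA.measurableSet hAc hA0 hA.measure_ne_top
    hB.isClosed hBc (nonempty_of_measure_ne_zero hB0) hB.measure_ne_top hmarg
  have hBA : B ⊆ -v +ᵥ A := by
    refine subset_vadd_of_marginal_eq hB.measurableSet hBc hB0 hB.measure_ne_top
      hA.isClosed hAc (nonempty_of_measure_ne_zero hA0) hA.measure_ne_top fun u hu => ?_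
    rw [hmarg u hu, Measure.map_map (measurable_add_const _) (measurable_add_const _)]
    simp [Function.comp_def]
  refine ⟨v, hAB.antisymm ?_⟩
  rwa [← vadd_set_subset_iff_subset_neg_vadd_set] at hBA

end Marginal

section Fiber

variable {E : Type*} [NormedAddCommGroup E] [NormedSpace ℝ E] {G : Set (ℝ × E)}

theorem smul_add_smul_mem_fiber (hGc : Convex ℝ G) {p q s t : ℝ} (hp : 0 ≤ p) (hq : 0 ≤ q)
    (hpq : p + q = 1) {x y : E} (hx : x ∈ Prod.mk s ⁻¹' G) (hy : y ∈ Prod.mk t ⁻¹' G) :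
    p • x + q • y ∈ Prod.mk (p * s + q * t) ⁻¹' G :=
  hGc hx hy hp hq hpq

theorem convex_fiber (hGc : Convex ℝ G) (t : ℝ) : Convex ℝ (Prod.mk t ⁻¹' G) :=
  fun x hx y hy p q hp hq hpq => by
    simpa only [← add_mul, hpq, one_mul] using smul_add_smul_mem_fiber hGc hp hq hpq hx hy

theorem smul_vadd_fiber_subset (hGc : Convex ℝ G) {v : E}
    (hv : Prod.mk 1 ⁻¹' G = v +ᵥ (Prod.mk (-1) ⁻¹' G)) {t : ℝ} (ht : t ∈ Icc (-1) 1) :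
    ((1 + t) / 2) • v +ᵥ (Prod.mk (-1) ⁻¹' G) ⊆ Prod.mk t ⁻¹' G := by
  rintro _ ⟨x, hx, rfl⟩
  have hvx : v + x ∈ Prod.mk 1 ⁻¹' G := hv ▸ vadd_mem_vadd_set hx
  have hcomb := smul_add_smul_mem_fiber hGc (p := (1 - t) / 2) (q := (1 + t) / 2)
    (by linarith [ht.2]) (by linarith [ht.1]) (by ring) hx hvx
  have hpoint : ((1 - t) / 2) • x + ((1 + t) / 2) • (v + x) = ((1 + t) / 2) • v + x := by module
  have hparam : (1 - t) / 2 * -1 + (1 + t) / 2 * 1 = t := by ring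
  rwa [hpoint, hparam] at hcomb

variable [FiniteDimensional ℝ E] [MeasurableSpace E] [BorelSpace E] (μ : Measure E)
  [μ.IsAddHaarMeasure]

theorem exists_fiber_eq_vadd (hG : IsClosed G) (hGc : Convex ℝ G)
    (h0 : μ (Prod.mk 0 ⁻¹' G) ≠ 0) (hfin : μ (Prod.mk 0 ⁻¹' G) ≠ ∞)
    (hconst : ∀ t ∈ Icc (-1 : ℝ) 1, μ (Prod.mk t ⁻¹' G) = μ (Prod.mk 0 ⁻¹' G)) :
    ∃ v : E, ∀ t ∈ Icc (-1 : ℝ) 1, Prod.mk t ⁻¹' G = (t • v) +ᵥ (Prod.mk 0 ⁻¹' G) := by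
  let M (t : ℝ) : Set E := Prod.mk t ⁻¹' G
  have hconv (t : ℝ) : Convex ℝ (M t) := convex_fiber hGc t
  have hclosed (t : ℝ) : IsClosed (M t) := hG.preimage (by fun_prop)
  have hM0 {t : ℝ} (ht : t ∈ Icc (-1) 1) : μ (M t) ≠ 0 := (hconst t ht).trans_ne h0
  have hMfin {t : ℝ} (ht : t ∈ Icc (-1) 1) : μ (M t) ≠ ∞ := (hconst t ht).trans_ne hfin
  have hcompact {t : ℝ} (ht : t ∈ Icc (-1) 1) : IsCompact (M t) :=
    Metric.isCompact_of_isClosed_isBounded (hclosed t)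
      (isBounded_of_convex_of_measure_ne_top μ (hconv t) (hM0 ht) (hMfin ht))
  have hl : (-1 : ℝ) ∈ Icc (-1) 1 := by norm_num
  have hr : (1 : ℝ) ∈ Icc (-1) 1 := by norm_num
  obtain ⟨v, hv⟩ : ∃ v : E, M 1 = v +ᵥ M (-1) := by
    refine exists_eq_vadd_of_measure_le (μ := μ) (hcompact hr) (hcompact hl) (hconv 1) (hconv (-1))
      (hclosed 0).measurableSet (hconv 0) (fun x hx y hy => ?_) (hM0 hr) (hM0 hl) ?_
    · simpa [M] using
        smul_add_smul_mem_fiber hGc one_half_pos.le one_half_pos.le (add_halves 1) hx hy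
    · rw [hconst 1 hr, hconst (-1) hl, ← ENNReal.rpow_add_of_nonneg _ _ one_half_pos.le
        one_half_pos.le, add_halves, ENNReal.rpow_one]
  have hshift {t : ℝ} (ht : t ∈ Icc (-1) 1) : M t = (((1 + t) / 2) • v) +ᵥ M (-1) :=
    (eq_of_subset_convex_of_measure_eq μ ((hclosed _).vadd _) (hconv t)
      (smul_vadd_fiber_subset hGc hv ht) (by rw [measure_vadd, hconst t ht, hconst (-1) hl])
      (hM0 ht) (hMfin ht)).symm
  refine ⟨(1 / 2 : ℝ) • v, fun t ht => ?_⟩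
  change M t = _ +ᵥ M 0
  rw [hshift ht, hshift (t := 0) (by norm_num), vadd_vadd]
  congr 1
  module

end Fiber

/-- The cylinder in the direction `v` generated by `A`. -/
def lineCylinder {E : Type*} [AddCommGroup E] [Module ℝ E] (v : E) (A : Set E) : Set E :=
  {y | ∃ x ∈ A, ∃ s : ℝ, y = x + s • v}

section Cylinder

variable {E : Type*} [AddCommGroup E] [Module ℝ E]

theorem subset_lineCylinder (v : E) (A : Set E) : A ⊆ lineCylinder v A :=
  fun x hx => ⟨x, hx, 0, by simp⟩

theorem smul_vadd_lineCylinder (t : ℝ) (v : E) (A : Set E) :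
    (t • v) +ᵥ lineCylinder v A = lineCylinder v A := by
  ext y
  rw [mem_vadd_set_iff_neg_vadd_mem, vadd_eq_add]
  constructor
  · rintro ⟨x, hx, s, hy⟩
    exact ⟨x, hx, s + t, by rw [neg_add_eq_iff_eq_add.1 hy]; module⟩
  · rintro ⟨x, hx, s, rfl⟩
    exact ⟨x, hx, s - t, by module⟩

theorem convex_comb_add_smul_mem {M : Set E} (hM : Convex ℝ M) {x q e : E} {s ε : ℝ} (hx : x ∈ M)
    (hq : ∀ t ∈ Icc (-1 : ℝ) 1, q + t • e ∈ M) (hε0 : 0 ≤ ε) (hε1 : ε < 1)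
    (hs : ε * |s| ≤ 1 - ε) : (1 - ε) • q + ε • (x + s • e) ∈ M := by
  have hε : 0 < 1 - ε := sub_pos.2 hε1
  have hqM : q + (ε * s / (1 - ε)) • e ∈ M := by
    refine hq _ (abs_le.1 ?_)
    rwa [abs_div, abs_mul, abs_of_nonneg hε0, abs_of_pos hε, div_le_one hε]
  have hcancel : (1 - ε) * (ε * s / (1 - ε)) = ε * s := mul_div_cancel₀ _ hε.ne'
  convert hM hqM hx hε.le hε0 (sub_add_cancel 1 ε) using 1
  rw [smul_add (1 - ε), smul_smul, hcancel]
  module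

variable [TopologicalSpace E] [ContinuousAdd E] [ContinuousSMul ℝ E]

theorem mem_of_forall_convex_comb_mem {S : Set E} (hS : IsClosed S) (hne : S.Nonempty) {y : E}
    {ε : ℝ} (hε0 : 0 < ε) (hε1 : ε < 1) (h : ∀ q ∈ S, (1 - ε) • q + ε • y ∈ S) : y ∈ S := by
  obtain ⟨p, hp⟩ := hne
  have hmem (k : ℕ) : y + (1 - ε) ^ k • (p - y) ∈ S := by
    induction k with
    | zero => simpa using hp
    | succ k ih =>
      convert h _ ih using 1
      rw [pow_succ']
      module
  have hlim : Tendsto (fun k : ℕ => y + (1 - ε) ^ k • (p - y)) atTop (𝓝 (y + (0 : ℝ) • (p - y))) :=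
    tendsto_const_nhds.add
      ((tendsto_pow_atTop_nhds_zero_of_lt_one (by linarith) (by linarith)).smul_const _)
  rw [zero_smul, add_zero] at hlim
  exact hS.mem_of_tendsto hlim (Eventually.of_forall hmem)

variable {K L : Set E} {v z w : E}

theorem lineCylinder_inter_lineCylinder_eq_inter (hK : IsClosed K) (hL : IsClosed L)
    (hKc : Convex ℝ K) (hLc : Convex ℝ L) (hne : (K ∩ L).Nonempty)
    (hv : ∀ q ∈ K ∩ L, ∀ t ∈ Icc (-1 : ℝ) 1, q + t • v ∈ K)
    (hz : ∀ q ∈ K ∩ L, ∀ t ∈ Icc (-1 : ℝ) 1, q + t • z ∈ L) :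
    lineCylinder v K ∩ lineCylinder z L = K ∩ L := by
  refine Subset.antisymm ?_ (inter_subset_inter (subset_lineCylinder v K) (subset_lineCylinder z L))
  rintro y ⟨⟨x, hx, s, hy⟩, x', hx', s', hy'⟩
  let ε := 1 / (2 + |s| + |s'|)
  have hε0 : 0 < ε := by positivity
  have hε : ε * (2 + |s| + |s'|) = 1 := one_div_mul_cancel (by positivity)
  have hε1 : ε < 1 := by nlinarith [abs_nonneg s, abs_nonneg s']
  refine mem_of_forall_convex_comb_mem (hK.inter hL) hne hε0 hε1 fun q hq => ⟨?_, ?_⟩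
  · rw [hy]
    exact convex_comb_add_smul_mem hKc hx (hv q hq) hε0.le hε1 (by nlinarith [abs_nonneg s'])
  · rw [hy']
    exact convex_comb_add_smul_mem hLc hx' (hz q hq) hε0.le hε1 (by nlinarith [abs_nonneg s])

theorem inter_vadd_eq_lineCylinder_inter_vadd_lineCylinder (hK : IsClosed K) (hL : IsClosed L)
    (hKc : Convex ℝ K) (hLc : Convex ℝ L) (hne : (K ∩ L).Nonempty)
    (h : ∀ t ∈ Icc (-1 : ℝ) 1, K ∩ ((t • w) +ᵥ L) = (t • v) +ᵥ (K ∩ L)) {t : ℝ}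
    (ht : t ∈ Icc (-1 : ℝ) 1) :
    K ∩ ((t • w) +ᵥ L) = lineCylinder v K ∩ ((t • w) +ᵥ lineCylinder (v - w) L) := by
  have hmem (q : E) (hq : q ∈ K ∩ L) (s : ℝ) (hs : s ∈ Icc (-1 : ℝ) 1) :
      q + s • v ∈ K ∩ ((s • w) +ᵥ L) := by
    rw [h s hs, add_comm]
    exact vadd_mem_vadd_set hq
  have hcyl : lineCylinder v K ∩ lineCylinder (v - w) L = K ∩ L := by
    refine lineCylinder_inter_lineCylinder_eq_inter hK hL hKc hLc hne
      (fun q hq s hs => (hmem q hq s hs).1) fun q hq s hs => ?_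
    have hL_mem := (hmem q hq s hs).2
    rw [mem_vadd_set_iff_neg_vadd_mem, vadd_eq_add] at hL_mem
    convert hL_mem using 1
    module
  calc K ∩ ((t • w) +ᵥ L) = (t • v) +ᵥ (lineCylinder v K ∩ lineCylinder (v - w) L) := by
        rw [hcyl, h t ht]
    _ = lineCylinder v K ∩ ((t • w + t • (v - w)) +ᵥ lineCylinder (v - w) L) := by
      rw [vadd_set_inter, smul_vadd_lineCylinder, ← smul_add, add_sub_cancel]
    _ = lineCylinder v K ∩ ((t • w) +ᵥ lineCylinder (v - w) L) := by
      rw [← vadd_vadd, smul_vadd_lineCylinder]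

end Cylinder

section Covariogram

variable {E : Type*} [NormedAddCommGroup E] [NormedSpace ℝ E] [FiniteDimensional ℝ E]
  [MeasurableSpace E] [BorelSpace E] (μ : Measure E) [μ.IsAddHaarMeasure] {K L : Set E}

theorem exists_inter_vadd_eq_vadd_inter (hKclosed : IsClosed K) (hKconv : Convex ℝ K)
    (hLclosed : IsClosed L) (hLconv : Convex ℝ L) (w : E) (hpos : μ (K ∩ L) ≠ 0)
    (hfin : μ (K ∩ L) ≠ ∞)
    (hconst : ∀ t ∈ Icc (-1 : ℝ) 1, μ (K ∩ ((t • w) +ᵥ L)) = μ (K ∩ L)) :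
    ∃ v : E, ∀ t ∈ Icc (-1 : ℝ) 1, K ∩ ((t • w) +ᵥ L) = (t • v) +ᵥ (K ∩ L) := by
  let f : ℝ × E →L[ℝ] E := ContinuousLinearMap.snd ℝ ℝ E -
    (ContinuousLinearMap.fst ℝ ℝ E).smulRight w
  let G : Set (ℝ × E) := Prod.snd ⁻¹' K ∩ f ⁻¹' L
  have hfiber (t : ℝ) : Prod.mk t ⁻¹' G = K ∩ ((t • w) +ᵥ L) := by
    ext x
    simp [G, f, mem_vadd_set_iff_neg_vadd_mem, sub_eq_neg_add]
  have hfiber0 : Prod.mk 0 ⁻¹' G = K ∩ L := by simp [hfiber]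
  have hG : IsClosed G := (hKclosed.preimage continuous_snd).inter (hLclosed.preimage f.continuous)
  have hGc : Convex ℝ G := (hKconv.linear_preimage (LinearMap.snd ℝ ℝ E)).inter
    (hLconv.linear_preimage f.toLinearMap)
  obtain ⟨v, hv⟩ := exists_fiber_eq_vadd μ hG hGc (by rwa [hfiber0]) (by rwa [hfiber0])
    fun t ht => by rw [hfiber0, hfiber, hconst t ht]
  exact ⟨v, fun t ht => by rw [← hfiber, ← hfiber0, hv t ht]⟩

theorem covariogram_constant_on_segment_general (hKclosed : IsClosed K) (hKconv : Convex ℝ K)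
    (hLclosed : IsClosed L) (hLconv : Convex ℝ L) (a w : E) (hpos : 0 < μ (K ∩ (a +ᵥ L)))
    (hfin : μ (K ∩ (a +ᵥ L)) < ⊤)
    (hconst : ∀ t ∈ Icc (-1 : ℝ) 1, μ (K ∩ ((a + t • w) +ᵥ L)) = μ (K ∩ (a +ᵥ L))) :
    ∃ v : E, ∀ t ∈ Icc (-1 : ℝ) 1, K ∩ ((a + t • w) +ᵥ L) =
      lineCylinder v K ∩ ((t • w) +ᵥ lineCylinder (v - w) (a +ᵥ L)) := by
  simp only [add_comm a, ← vadd_vadd] at hconst ⊢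
  obtain ⟨v, hv⟩ := exists_inter_vadd_eq_vadd_inter μ hKclosed hKconv (hLclosed.vadd a)
    (hLconv.vadd a) w hpos.ne' hfin.ne hconst
  exact ⟨v, fun t ht => inter_vadd_eq_lineCylinder_inter_vadd_lineCylinder hKclosed
    (hLclosed.vadd a) hKconv (hLconv.vadd a) (nonempty_of_measure_ne_zero hpos.ne') hv ht⟩

end Covariogram

/-- Theorem 1.2 (g_{K,L} constant on a line segment): if the cross covariogram of closed
convex sets `K, L` is constant (and positive, finite) on the segment `{a + tw : t ∈ [-1,1]}`,
then there is `v` such that `K ∩ (L + a + tw) = K' ∩ (L' + tw)` for all `t ∈ [-1,1]`, where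
`K'` is the cylinder in direction `v` generated by `K` and `L'` is the cylinder in direction
`v - w` generated by `L + a`. -/
theorem covariogram_constant_on_segment
    (n : ℕ) (hn : 1 < n)
    (K L : Set (EuclideanSpace ℝ (Fin n)))
    (hKne : K.Nonempty) (hKclosed : IsClosed K) (hKconv : Convex ℝ K)
    (hLne : L.Nonempty) (hLclosed : IsClosed L) (hLconv : Convex ℝ L)
    (a w : EuclideanSpace ℝ (Fin n)) (hw : w ≠ 0)
    (hpos : 0 < volume (K ∩ (a +ᵥ L)))
    (hfin : volume (K ∩ (a +ᵥ L)) < ⊤)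
    (hconst : ∀ t ∈ Icc (-1 : ℝ) 1,
      volume (K ∩ ((a + t • w) +ᵥ L)) = volume (K ∩ (a +ᵥ L))) :
    ∃ v : EuclideanSpace ℝ (Fin n), ∀ t ∈ Icc (-1 : ℝ) 1,
      K ∩ ((a + t • w) +ᵥ L) =
        {y | ∃ x ∈ K, ∃ s : ℝ, y = x + s • v} ∩
          ((t • w) +ᵥ {y | ∃ x ∈ (a +ᵥ L), ∃ s : ℝ, y = x + s • (v - w)}) :=
  covariogram_constant_on_segment_general volume hKclosed hKconv hLclosed hLconv a w hpos hfin
    hconst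
end

section
/- Let n > 1 and let K, L ⊆ ℝⁿ be nonempty closed convex sets whose cross covariogram g = g_{K,L} satisfies 0 < g(a) < ∞ for some a ∈ ℝⁿ. Suppose that for some t ∈ (0,1) and some x₀ ≠ x₁ with g(x₀) > 0 and g(x₁) > 0 one has g((1−t)x₀ + t x₁)^{1/n} = (1−t) g(x₀)^{1/n} + t g(x₁)^{1/n}, and set x_t := (1−t)x₀ + t x₁. Then the three convex bodies K ∩ (L + x₀), K ∩ (L + x₁), and K ∩ (L + x_t) are pairwise homothetic. -/
open MeasureTheory Set Pointwise

/-- Two subsets of `ℝⁿ` are homothetic if one is obtained from the other by a dilation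
(by a positive factor) followed by a translation. -/
def Homothetic {n : ℕ} (A B : Set (EuclideanSpace ℝ (Fin n))) : Prop :=
  ∃ c : ℝ, 0 < c ∧ ∃ x : EuclideanSpace ℝ (Fin n), B = x +ᵥ (c • A)

/-!
The Brunn–Minkowski inequality is proved by induction on the dimension. Slicing two convex bodies
along a linear form reduces it to the one-dimensional Prékopa–Leindler inequality for the densities
of the slice measures, which follows by transporting one density monotonically onto the other and
applying the arithmetic–geometric mean inequality to the transport's derivative. If equality holds,
that derivative is `1`, so one density is a translate of the other: under every linear form, the
uniform measures on the two bodies have the same image up to translation. By the Cramér–Wold theorem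
the uniform measures, hence the bodies themselves, are translates. Rescaling to unit measure turns
this into homothety in the equality case of the additive inequality, which is applied to
`(1 - t) (K ∩ (L + x₀)) + t (K ∩ (L + x₁)) ⊆ K ∩ (L + x_t)`.
-/

section Homothety

variable {V : Type*} [AddCommGroup V] [Module ℝ V] {A B C K L : Set V}

/-- The relation `Homothetic` in an arbitrary real vector space. -/
def IsHomothetic (A B : Set V) : Prop :=
  ∃ c : ℝ, 0 < c ∧ ∃ x : V, B = x +ᵥ c • A

theorem isHomothetic_vadd (A : Set V) (v : V) : IsHomothetic A (v +ᵥ A) :=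
  ⟨1, one_pos, v, by rw [one_smul]⟩

theorem isHomothetic_smul (A : Set V) {c : ℝ} (hc : 0 < c) : IsHomothetic A (c • A) :=
  ⟨c, hc, 0, (zero_vadd V _).symm⟩

theorem smul_set_vadd_set (c : ℝ) (x : V) (A : Set V) : c • (x +ᵥ A) = (c • x) +ᵥ c • A := by
  simp only [← image_smul, ← image_vadd, image_image, vadd_eq_add, smul_add]

theorem IsHomothetic.symm (h : IsHomothetic A B) : IsHomothetic B A := by
  obtain ⟨c, hc, x, rfl⟩ := h
  refine ⟨c⁻¹, inv_pos.2 hc, -(c⁻¹ • x), ?_⟩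
  rw [smul_set_vadd_set, inv_smul_smul₀ hc.ne', neg_vadd_vadd]

theorem IsHomothetic.trans (h₁ : IsHomothetic A B) (h₂ : IsHomothetic B C) :
    IsHomothetic A C := by
  obtain ⟨c, hc, x, rfl⟩ := h₁
  obtain ⟨d, hd, y, rfl⟩ := h₂
  exact ⟨d * c, mul_pos hd hc, y + d • x, by
    rw [smul_set_vadd_set, smul_smul, vadd_vadd]⟩

theorem smul_add_smul_vadd_smul (hK : Convex ℝ K) {p q c : ℝ} (hp : 0 ≤ p) (hq : 0 ≤ q)
    (hc : 0 ≤ c) (v : V) :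
    p • K + q • (v +ᵥ c • K) = (q • v) +ᵥ (p + q * c) • K := by
  rw [smul_set_vadd_set, smul_smul, add_vadd_comm, ← hK.add_smul hp (mul_nonneg hq hc)]

theorem IsHomothetic.smul_add_smul (hKL : IsHomothetic K L) (hK : Convex ℝ K) {p q : ℝ}
    (hp : 0 < p) (hq : 0 < q) : IsHomothetic K (p • K + q • L) := by
  obtain ⟨c, hc, v, rfl⟩ := hKL
  exact ⟨p + q * c, by positivity, q • v, smul_add_smul_vadd_smul hK hp.le hq.le hc.le v⟩

end Homothety

section ConvexMeasure

variable {E : Type*} [NormedAddCommGroup E] [NormedSpace ℝ E] [FiniteDimensional ℝ E]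
  [MeasurableSpace E] [BorelSpace E] {μ : Measure E} [μ.IsAddHaarMeasure] {M N : Set E}

theorem convex_nonempty_interior_of_measure_ne_zero (hN : Convex ℝ N) (h : μ N ≠ 0) :
    (interior N).Nonempty := by
  contrapose! h
  refine measure_mono_null ?_ (hN.addHaar_frontier μ)
  simpa only [frontier, h, sdiff_empty] using subset_closure

theorem convex_subset_of_measure_diff_eq_zero (hN : Convex ℝ N) (hN₀ : μ N ≠ 0)
    (hM : IsClosed M) (h : μ (N \ M) = 0) : N ⊆ M := by
  have hint : interior N \ M = ∅ :=
    (isOpen_interior.sdiff hM).measure_eq_zero_iff μ |>.1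
      (measure_mono_null (sdiff_subset_sdiff_left interior_subset) h)
  calc N ⊆ closure N := subset_closure
    _ = closure (interior N) := (hN.closure_interior_eq_closure_of_nonempty_interior
          (convex_nonempty_interior_of_measure_ne_zero hN hN₀)).symm
    _ ⊆ M := closure_minimal (sdiff_eq_empty.1 hint) hM

theorem convex_eq_of_subset_of_measure_le (hN : Convex ℝ N) (hN₀ : μ N ≠ 0) (hN' : μ N ≠ ⊤)
    (hM : IsClosed M) (hMN : M ⊆ N) (h : μ N ≤ μ M) : M = N := by
  refine hMN.antisymm (convex_subset_of_measure_diff_eq_zero hN hN₀ hM (μ := μ) ?_)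
  rw [measure_sdiff hMN hM.nullMeasurableSet (ne_top_of_le_ne_top hN' (measure_mono hMN)),
    tsub_eq_zero_of_le h]

theorem convex_isBounded_of_measure_ne_top (hN : Convex ℝ N) (hcl : IsClosed N)
    (hN₀ : μ N ≠ 0) (hN' : μ N ≠ ⊤) : Bornology.IsBounded N := by
  obtain ⟨p, hp⟩ := convex_nonempty_interior_of_measure_ne_zero hN hN₀
  obtain ⟨r, hr, hball⟩ := Metric.isOpen_iff.1 isOpen_interior p hp
  by_contra hunb
  obtain ⟨v, hv₀, hv⟩ :=
    not_bounded_iff_exists_ne_zero_mem_asymptoticCone.1 hunb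
  set w : E := (2 * r / ‖v‖) • v
  have hw : ‖w‖ = 2 * r := by
    rw [norm_smul, Real.norm_of_nonneg (by positivity), div_mul_cancel₀ _ (norm_ne_zero_iff.2 hv₀)]
  have htranslate (k : ℕ) : Metric.ball (p + (k : ℝ) • w) r ⊆ N := by
    intro y hy
    have hy' : y - (k : ℝ) • w ∈ N := interior_subset (hball (by
      rwa [Metric.mem_ball, dist_eq_norm, sub_right_comm, sub_sub, ← dist_eq_norm]))
    have := hN.smul_vadd_mem_of_isClosed_of_mem_asymptoticCone hcl
      (show 0 ≤ (k : ℝ) * (2 * r / ‖v‖) by positivity) hv hy'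
    rwa [mul_smul, vadd_eq_add, add_sub_cancel] at this
  have hdisj : Pairwise (Function.onFun Disjoint fun k : ℕ ↦ Metric.ball (p + (k : ℝ) • w) r) := by
    intro i j hij
    refine Metric.ball_disjoint_ball ?_
    rw [dist_add_left, dist_eq_norm, ← sub_smul, norm_smul, hw, ← two_mul]
    have hij' : (1 : ℝ) ≤ ‖(i : ℝ) - j‖ := by
      rw [Real.norm_eq_abs]
      exact_mod_cast Int.one_le_abs (sub_ne_zero.2 (Nat.cast_injective.ne hij : (i : ℤ) ≠ j))
    nlinarith
  have hfin := Measure.finite_const_le_meas_of_disjoint_iUnion μ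
    (Metric.measure_ball_pos μ (0 : E) hr) (fun _ ↦ Metric.isOpen_ball.measurableSet) hdisj
    (ne_top_of_le_ne_top hN' (measure_mono (iUnion_subset htranslate)))
  refine infinite_univ (α := ℕ) (hfin.subset fun k _ ↦ ?_)
  exact (Measure.addHaar_ball_center μ _ r).ge

end ConvexMeasure

section PrekopaLeindler

/-- `f` is a continuous positive probability density on the bounded interval `(a, b)`; its values
outside the interval are irrelevant. -/
structure IsPosDensity (f : ℝ → ℝ) (a b : ℝ) : Prop where
  lt : a < b
  continuousOn : ContinuousOn f (Ioo a b)
  pos : ∀ x ∈ Ioo a b, 0 < f x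
  integral_eq_one : ∫ x in Ioo a b, f x = 1

variable {a b c d t : ℝ} {f g : ℝ → ℝ}

theorem IsPosDensity.integrableOn (hf : IsPosDensity f a b) : IntegrableOn f (Ioo a b) :=
  integrable_of_integral_eq_one hf.integral_eq_one

theorem IsPosDensity.exists_cdf (hf : IsPosDensity f a b) :
    ∃ F : ℝ → ℝ, StrictMonoOn F (Ioo a b) ∧ F '' Ioo a b = Ioo 0 1 ∧
      ∀ x ∈ Ioo a b, HasDerivAt F (f x) x := by
  let F : ℝ → ℝ := fun x ↦ ∫ y in a..x, f y
  have hab : a ≤ b := hf.lt.le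
  have hint : IntegrableOn f (Icc a b) :=
    (integrableOn_Icc_iff_integrableOn_Ioo).2 hf.integrableOn
  have hcont : ContinuousOn F (Icc a b) := by
    rw [← uIcc_of_le hab] at hint ⊢
    exact intervalIntegral.continuousOn_primitive_interval hint
  have hderiv : ∀ x ∈ Ioo a b, HasDerivAt F (f x) x := fun x hx ↦
    intervalIntegral.integral_hasDerivAt_right
      (hint.mono_set (uIcc_subset_Icc (left_mem_Icc.2 hab)
        (Ioo_subset_Icc_self hx))).intervalIntegrable
      (hf.continuousOn.stronglyMeasurableAtFilter isOpen_Ioo x hx)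
      (hf.continuousOn.continuousAt (Ioo_mem_nhds hx.1 hx.2))
  have hmono : StrictMonoOn F (Icc a b) := by
    refine strictMonoOn_of_deriv_pos (convex_Icc a b) hcont fun x hx ↦ ?_
    rw [interior_Icc] at hx
    rw [(hderiv x hx).deriv]
    exact hf.pos x hx
  have hFa : F a = 0 := intervalIntegral.integral_same
  have hFb : F b = 1 := by
    rw [← hf.integral_eq_one, ← integral_Ioc_eq_integral_Ioo]
    exact intervalIntegral.integral_of_le hab
  refine ⟨F, hmono.mono Ioo_subset_Icc_self, ?_, hderiv⟩
  rw [← hFa, ← hFb]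
  refine Subset.antisymm ?_ (intermediate_value_Ioo hab hcont)
  exact (hmono.mapsTo_Ioo).image_subset

theorem exists_inverse_of_strictMonoOn_Ioo {G G' : ℝ → ℝ} {p q : ℝ}
    (hG : StrictMonoOn G (Ioo c d)) (himage : G '' Ioo c d = Ioo p q)
    (hderiv : ∀ y ∈ Ioo c d, HasDerivAt G (G' y) y) (hne : ∀ y ∈ Ioo c d, G' y ≠ 0) :
    ∃ S : ℝ → ℝ, StrictMonoOn S (Ioo p q) ∧ S '' Ioo p q = Ioo c d ∧
      ∀ s ∈ Ioo p q, HasDerivAt S (G' (S s))⁻¹ s := by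
  let S := Function.invFunOn G (Ioo c d)
  have hbij : BijOn G (Ioo c d) (Ioo p q) := himage ▸ hG.injOn.bijOn_image
  have hinv : InvOn S G (Ioo c d) (Ioo p q) := hbij.invOn_invFunOn
  have hS : BijOn S (Ioo p q) (Ioo c d) := (bijOn_comm hinv).2 hbij
  have hmono : StrictMonoOn S (Ioo p q) := fun s hs u hu hsu ↦ by
    rwa [← hG.lt_iff_lt (hS.mapsTo hs) (hS.mapsTo hu), hinv.2 hs, hinv.2 hu]
  refine ⟨S, hmono, hS.image_eq, fun s hs ↦ ?_⟩
  have hs' := hS.mapsTo hs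
  have hcont : ContinuousAt S s := by
    refine hmono.continuousAt_of_image_mem_nhds (Ioo_mem_nhds hs.1 hs.2) ?_
    rw [hS.image_eq]
    exact Ioo_mem_nhds hs'.1 hs'.2
  exact (hderiv _ hs').of_local_left_inverse hcont (hne _ hs')
    (Filter.eventually_of_mem (Ioo_mem_nhds hs.1 hs.2) hinv.2)

theorem IsPosDensity.exists_transport (hf : IsPosDensity f a b) (hg : IsPosDensity g c d) :
    ∃ T : ℝ → ℝ, StrictMonoOn T (Ioo a b) ∧ T '' Ioo a b = Ioo c d ∧
      ∀ x ∈ Ioo a b, HasDerivAt T (f x / g (T x)) x := by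
  obtain ⟨F, hFmono, hFimage, hF⟩ := hf.exists_cdf
  obtain ⟨G, hGmono, hGimage, hG⟩ := hg.exists_cdf
  obtain ⟨S, hSmono, hSimage, hS⟩ :=
    exists_inverse_of_strictMonoOn_Ioo hGmono hGimage hG fun y hy ↦ (hg.pos y hy).ne'
  have hFmaps : MapsTo F (Ioo a b) (Ioo 0 1) := hFimage ▸ mapsTo_image F _
  refine ⟨S ∘ F, hSmono.comp hFmono hFmaps, ?_, fun x hx ↦ ?_⟩
  · rw [image_comp, hFimage, hSimage]
  · rw [div_eq_inv_mul]
    exact (hS _ (hFmaps hx)).comp x (hF x hx)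

theorem self_eq_div_rpow_mul {u v : ℝ} (t : ℝ) (hu : 0 < u) (hv : 0 < v) :
    u = (u / v) ^ t * (u ^ (1 - t) * v ^ t) := by
  rw [Real.div_rpow hu.le hv.le, Real.rpow_sub hu, Real.rpow_one]
  field_simp

theorem self_le_one_sub_add_mul_div_mul_rpow {u v : ℝ} (ht : t ∈ Ioo (0 : ℝ) 1) (hu : 0 < u)
    (hv : 0 < v) : u ≤ (1 - t + t * (u / v)) * (u ^ (1 - t) * v ^ t) := by
  have hmean : (u / v) ^ t ≤ 1 - t + t * (u / v) := by
    simpa using Real.geom_mean_le_arith_mean2_weighted (sub_nonneg.2 ht.2.le) ht.1.le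
      zero_le_one (div_pos hu hv).le (sub_add_cancel 1 t)
  calc u = (u / v) ^ t * (u ^ (1 - t) * v ^ t) := self_eq_div_rpow_mul t hu hv
    _ ≤ _ := by gcongr

theorem eq_of_self_eq_one_sub_add_mul_div_mul_rpow {u v : ℝ} (ht : t ∈ Ioo (0 : ℝ) 1)
    (hu : 0 < u) (hv : 0 < v) (h : u = (1 - t + t * (u / v)) * (u ^ (1 - t) * v ^ t)) :
    u = v := by
  have hmean : (u / v) ^ t = 1 - t + t * (u / v) :=
    mul_right_cancel₀ (by positivity) ((self_eq_div_rpow_mul t hu hv).symm.trans h)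
  have hone : 1 = u / v := (Real.geom_mean_eq_arith_mean2_weighted_iff_of_pos
    (sub_pos.2 ht.2) ht.1 zero_le_one (div_pos hu hv).le (sub_add_cancel 1 t)).1 (by simpa)
  exact (div_eq_one_iff_eq hv.ne').1 hone.symm

theorem lintegral_transport_le {T : ℝ → ℝ} {h : ℝ → ENNReal} (ht : t ∈ Ioo (0 : ℝ) 1)
    (hf : ∀ x ∈ Ioo a b, 0 < f x) (hg : ∀ y ∈ Ioo c d, 0 < g y)
    (hTmono : StrictMonoOn T (Ioo a b)) (hT : MapsTo T (Ioo a b) (Ioo c d))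
    (hderiv : ∀ x ∈ Ioo a b, HasDerivAt T (f x / g (T x)) x)
    (hh : ∀ x ∈ Ioo a b, ∀ y ∈ Ioo c d,
      ENNReal.ofReal (f x ^ (1 - t) * g y ^ t) ≤ h ((1 - t) * x + t * y)) :
    ∫⁻ x in Ioo a b,
      ENNReal.ofReal ((1 - t + t * (f x / g (T x))) * (f x ^ (1 - t) * g (T x) ^ t))
      ≤ ∫⁻ z, h z := by
  have : 0 < t := ht.1
  have : 0 < 1 - t := sub_pos.2 ht.2
  let S : ℝ → ℝ := fun x ↦ (1 - t) * x + t * T x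
  have hSderiv : ∀ x ∈ Ioo a b, HasDerivAt S (1 - t + t * (f x / g (T x))) x := fun x hx ↦
    (((hasDerivAt_id x).const_mul (1 - t)).add ((hderiv x hx).const_mul t)).congr_deriv
      (by rw [mul_one])
  have hSmono : MonotoneOn S (Ioo a b) := fun x hx y hy hxy ↦ by
    have hTxy := hTmono.monotoneOn hx hy hxy
    dsimp only [S]
    gcongr
  calc _ ≤ ∫⁻ x in Ioo a b, ENNReal.ofReal (1 - t + t * (f x / g (T x))) * h (S x) := by
        refine setLIntegral_mono' measurableSet_Ioo fun x hx ↦ ?_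
        have hfx := hf x hx
        have hgT := hg _ (hT hx)
        rw [ENNReal.ofReal_mul (by positivity)]
        gcongr
        exact hh x hx _ (hT hx)
    _ = ∫⁻ z in S '' Ioo a b, h z :=
        (lintegral_image_eq_lintegral_deriv_mul_of_monotoneOn measurableSet_Ioo
          (fun x hx ↦ (hSderiv x hx).hasDerivWithinAt) hSmono h).symm
    _ ≤ ∫⁻ z, h z := setLIntegral_le_lintegral _ _

theorem IsPosDensity.lintegral_ofReal (hf : IsPosDensity f a b) :
    ∫⁻ x in Ioo a b, ENNReal.ofReal (f x) = 1 := by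
  rw [← ofReal_integral_eq_lintegral_ofReal hf.integrableOn
    ((ae_restrict_mem measurableSet_Ioo).mono fun x hx ↦ (hf.pos x hx).le),
    hf.integral_eq_one, ENNReal.ofReal_one]

theorem IsPosDensity.one_le_lintegral_of_rpow_mul_rpow_le {h : ℝ → ENNReal}
    (hf : IsPosDensity f a b) (hg : IsPosDensity g c d) (ht : t ∈ Ioo (0 : ℝ) 1)
    (hh : ∀ x ∈ Ioo a b, ∀ y ∈ Ioo c d,
      ENNReal.ofReal (f x ^ (1 - t) * g y ^ t) ≤ h ((1 - t) * x + t * y)) :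
    1 ≤ ∫⁻ z, h z := by
  obtain ⟨T, hTmono, himage, hderiv⟩ := hf.exists_transport hg
  have hT : MapsTo T (Ioo a b) (Ioo c d) := himage ▸ mapsTo_image T _
  rw [← hf.lintegral_ofReal]
  refine le_trans ?_ (lintegral_transport_le ht hf.pos hg.pos hTmono hT hderiv hh)
  exact setLIntegral_mono' measurableSet_Ioo fun x hx ↦ ENNReal.ofReal_le_ofReal
    (self_le_one_sub_add_mul_div_mul_rpow ht (hf.pos x hx) (hg.pos _ (hT hx)))

theorem IsPosDensity.eqOn_transport_of_lintegral_le_one {T : ℝ → ℝ} {h : ℝ → ENNReal}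
    (hf : IsPosDensity f a b) (hg : IsPosDensity g c d) (ht : t ∈ Ioo (0 : ℝ) 1)
    (hTmono : StrictMonoOn T (Ioo a b)) (hT : MapsTo T (Ioo a b) (Ioo c d))
    (hderiv : ∀ x ∈ Ioo a b, HasDerivAt T (f x / g (T x)) x)
    (hh : ∀ x ∈ Ioo a b, ∀ y ∈ Ioo c d,
      ENNReal.ofReal (f x ^ (1 - t) * g y ^ t) ≤ h ((1 - t) * x + t * y))
    (hle : ∫⁻ z, h z ≤ 1) : EqOn f (g ∘ T) (Ioo a b) := by
  let k : ℝ → ℝ := fun x ↦ (1 - t + t * (f x / g (T x))) * (f x ^ (1 - t) * g (T x) ^ t)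
  have hfk : ∀ x ∈ Ioo a b, f x ≤ k x := fun x hx ↦
    self_le_one_sub_add_mul_div_mul_rpow ht (hf.pos x hx) (hg.pos _ (hT hx))
  have hgT : ContinuousOn (g ∘ T) (Ioo a b) :=
    hg.continuousOn.comp (fun x hx ↦ (hderiv x hx).continuousAt.continuousWithinAt) hT
  have hfne : ∀ x ∈ Ioo a b, f x ≠ 0 := fun x hx ↦ (hf.pos x hx).ne'
  have hgne : ∀ x ∈ Ioo a b, g (T x) ≠ 0 := fun x hx ↦ (hg.pos _ (hT hx)).ne'
  have hk : ContinuousOn k (Ioo a b) :=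
    (continuousOn_const.add (continuousOn_const.mul (hf.continuousOn.div hgT hgne))).mul
      ((hf.continuousOn.rpow_const fun x hx ↦ Or.inl (hfne x hx)).mul
        (hgT.rpow_const fun x hx ↦ Or.inl (hgne x hx)))
  have hae : (fun x ↦ ENNReal.ofReal (f x)) =ᵐ[volume.restrict (Ioo a b)]
      fun x ↦ ENNReal.ofReal (k x) := by
    refine ae_eq_of_ae_le_of_lintegral_le ?_ ?_ ?_ ?_
    · exact (ae_restrict_mem measurableSet_Ioo).mono fun x hx ↦
        ENNReal.ofReal_le_ofReal (hfk x hx)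
    · rw [hf.lintegral_ofReal]
      exact ENNReal.one_ne_top
    · exact (hk.aemeasurable measurableSet_Ioo).ennreal_ofReal
    · rw [hf.lintegral_ofReal]
      exact (lintegral_transport_le ht hf.pos hg.pos hTmono hT hderiv hh).trans hle
  have hae' : f =ᵐ[volume.restrict (Ioo a b)] k := by
    filter_upwards [hae, ae_restrict_mem measurableSet_Ioo] with x hx hmem
    exact (ENNReal.ofReal_eq_ofReal_iff (hf.pos x hmem).le
      ((hf.pos x hmem).le.trans (hfk x hmem))).1 hx
  have heq : EqOn f k (Ioo a b) :=
    Measure.eqOn_open_of_ae_eq hae' isOpen_Ioo hf.continuousOn hk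
  exact fun x hx ↦
    eq_of_self_eq_one_sub_add_mul_div_mul_rpow ht (hf.pos x hx) (hg.pos _ (hT hx)) (heq hx)

theorem exists_eq_add_const_of_hasDerivAt_one {T : ℝ → ℝ} (hab : a < b)
    (hT : ∀ x ∈ Ioo a b, HasDerivAt T 1 x) : ∃ e, EqOn T (· + e) (Ioo a b) := by
  obtain ⟨x₀, hx₀⟩ := nonempty_Ioo.2 hab
  refine ⟨T x₀ - x₀, fun x hx ↦ ?_⟩
  have hderiv : ∀ y ∈ Ioo a b, HasDerivAt (fun y ↦ T y - y) 0 y := fun y hy ↦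
    ((hT y hy).sub (hasDerivAt_id y)).congr_deriv (sub_self 1)
  have hconst : T x - x = T x₀ - x₀ := isOpen_Ioo.is_const_of_deriv_eq_zero
    (convex_Ioo a b).isPreconnected
    (fun y hy ↦ (hderiv y hy).differentiableAt.differentiableWithinAt)
    (fun y hy ↦ (hderiv y hy).deriv) hx hx₀
  linarith

theorem IsPosDensity.exists_translate_of_lintegral_le_one {h : ℝ → ENNReal}
    (hf : IsPosDensity f a b) (hg : IsPosDensity g c d) (ht : t ∈ Ioo (0 : ℝ) 1)
    (hh : ∀ x ∈ Ioo a b, ∀ y ∈ Ioo c d,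
      ENNReal.ofReal (f x ^ (1 - t) * g y ^ t) ≤ h ((1 - t) * x + t * y))
    (hle : ∫⁻ z, h z ≤ 1) :
    ∃ e, (· + e) '' Ioo a b = Ioo c d ∧ ∀ x ∈ Ioo a b, g (x + e) = f x := by
  obtain ⟨T, hTmono, himage, hderiv⟩ := hf.exists_transport hg
  have hT : MapsTo T (Ioo a b) (Ioo c d) := himage ▸ mapsTo_image T _
  have hfg := hf.eqOn_transport_of_lintegral_le_one hg ht hTmono hT hderiv hh hle
  obtain ⟨e, he⟩ := exists_eq_add_const_of_hasDerivAt_one hf.lt fun x hx ↦ by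
    have hTx := hderiv x hx
    rwa [hfg hx, Function.comp_apply, div_self (hg.pos _ (hT hx)).ne'] at hTx
  refine ⟨e, he.image_eq ▸ himage, fun x hx ↦ ?_⟩
  exact (congrArg g (he hx)).symm.trans (hfg hx).symm

end PrekopaLeindler

section Sections

open scoped ProbabilityTheory

theorem exists_eq_Ioo_of_isOpen {J : Set ℝ} (ho : IsOpen J) (hc : IsConnected J)
    (hb : Bornology.IsBounded J) : ∃ a b, a < b ∧ J = Ioo a b := by
  have hJ : J = Ioo (sInf J) (sSup J) := by
    refine Subset.antisymm ?_ (hc.Ioo_csInf_csSup_subset hb.bddBelow hb.bddAbove)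
    rw [← interior_Icc]
    exact interior_maximal (subset_Icc_csInf_csSup hb.bddBelow hb.bddAbove) ho
  exact ⟨sInf J, sSup J, nonempty_Ioo.1 (hJ ▸ hc.nonempty), hJ⟩

theorem map_withDensity_comp {X Y : Type*} [MeasurableSpace X] [MeasurableSpace Y]
    {μ : Measure X} {ρ : Measure Y} {φ : X → Y} (hφ : MeasurePreserving φ μ ρ)
    (hφ' : MeasurableEmbedding φ) (u : Y → ENNReal) :
    (μ.withDensity (u ∘ φ)).map φ = ρ.withDensity u := by
  ext s hs
  rw [Measure.map_apply hφ.measurable hs, withDensity_apply _ (hφ.measurable hs),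
    withDensity_apply _ hs]
  exact hφ.setLIntegral_comp_preimage_emb hφ' u s

/-- The multiplicative form of the Brunn–Minkowski inequality for `μ`, restricted to compact convex
sets. -/
def IsLogConcaveOnConvex {E : Type*} [NormedAddCommGroup E] [NormedSpace ℝ E] [MeasurableSpace E]
    (μ : Measure E) : Prop :=
  ∀ ⦃K L : Set E⦄, IsCompact K → Convex ℝ K → IsCompact L → Convex ℝ L →
    ∀ ⦃t : ℝ⦄, t ∈ Ioo (0 : ℝ) 1 →
      μ.real K ^ (1 - t) * μ.real L ^ t ≤ μ.real ((1 - t) • K + t • L)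

variable {F : Type*} [NormedAddCommGroup F] {K L : Set (ℝ × F)}

theorem isCompact_section (hK : IsCompact K) (s : ℝ) : IsCompact (Prod.mk s ⁻¹' K) := by
  refine (hK.image continuous_snd).of_isClosed_subset
    (hK.isClosed.preimage (Continuous.prodMk_right s)) fun y hy ↦ ?_
  exact ⟨(s, y), hy, rfl⟩

section

variable [NormedSpace ℝ F]

theorem smul_section_add_smul_section_subset (p q s r : ℝ) :
    p • (Prod.mk s ⁻¹' K) + q • (Prod.mk r ⁻¹' L) ⊆
      Prod.mk (p * s + q * r) ⁻¹' (p • K + q • L) := by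
  rintro _ ⟨_, ⟨x, hx, rfl⟩, _, ⟨y, hy, rfl⟩, rfl⟩
  exact ⟨_, smul_mem_smul_set hx, _, smul_mem_smul_set hy, rfl⟩

theorem convex_section (hK : Convex ℝ K) (s : ℝ) : Convex ℝ (Prod.mk s ⁻¹' K) := by
  refine convex_iff_pointwise_add_subset.2 fun p q hp hq hpq ↦ ?_
  refine (smul_section_add_smul_section_subset p q s s).trans ?_
  rw [← add_mul, hpq, one_mul, ← hK.add_smul hp hq, hpq, one_smul]

theorem exists_fst_image_interior_eq_Ioo (hK : IsCompact K) (hKc : Convex ℝ K)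
    (hint : (interior K).Nonempty) : ∃ a b, a < b ∧ Prod.fst '' interior K = Ioo a b :=
  exists_eq_Ioo_of_isOpen (isOpenMap_fst _ isOpen_interior)
    ((hKc.interior.isConnected hint).image _ continuous_fst.continuousOn)
    ((hK.image continuous_fst).isBounded.subset (image_mono interior_subset))

theorem section_eq_empty_of_notMem_closure (hK : Convex ℝ K) (hint : (interior K).Nonempty)
    {s : ℝ} (hs : s ∉ closure (Prod.fst '' interior K)) : Prod.mk s ⁻¹' K = ∅ := by
  refine eq_empty_of_forall_notMem fun y hy ↦ hs ?_
  refine image_closure_subset_closure_image continuous_fst ⟨(s, y), ?_, rfl⟩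
  rw [hK.closure_interior_eq_closure_of_nonempty_interior hint]
  exact subset_closure hy

end

variable [MeasurableSpace F] {ν : Measure F}

theorem measure_section_pos [ν.IsOpenPosMeasure] {s : ℝ}
    (hs : s ∈ Prod.fst '' interior K) : 0 < ν (Prod.mk s ⁻¹' K) := by
  obtain ⟨⟨_, y⟩, hx, rfl⟩ := hs
  refine Measure.measure_pos_of_nonempty_interior ν ⟨y, ?_⟩
  exact preimage_interior_subset_interior_preimage (Continuous.prodMk_right _) hx

/-- The density of the first coordinate of a point distributed uniformly in `K ⊆ ℝ × F`. -/
noncomputable def fstDensity (ν : Measure F) (K : Set (ℝ × F)) (s : ℝ) : ℝ :=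
  ν.real (Prod.mk s ⁻¹' K) / (volume.prod ν).real K

theorem ofReal_fstDensity [IsFiniteMeasureOnCompacts ν] (hK : IsCompact K)
    (hK₀ : (volume.prod ν) K ≠ 0) (s : ℝ) :
    ENNReal.ofReal (fstDensity ν K s) =
      ((volume.prod ν) K)⁻¹ * ν (Prod.mk s ⁻¹' K) := by
  have hKpos : 0 < (volume.prod ν).real K := ENNReal.toReal_pos hK₀ hK.measure_ne_top
  rw [fstDensity, ENNReal.ofReal_div_of_pos hKpos,
    ofReal_measureReal (isCompact_section hK s).measure_ne_top,
    ofReal_measureReal hK.measure_ne_top, ENNReal.div_eq_inv_mul]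

variable [NormedSpace ℝ F]

theorem IsLogConcaveOnConvex.section_rpow_mul_section_rpow_le [IsFiniteMeasureOnCompacts ν]
    (hν : IsLogConcaveOnConvex ν)
    (hK : IsCompact K) (hKc : Convex ℝ K) (hL : IsCompact L) (hLc : Convex ℝ L) {t : ℝ}
    (ht : t ∈ Ioo (0 : ℝ) 1) (s r : ℝ) :
    ν.real (Prod.mk s ⁻¹' K) ^ (1 - t) * ν.real (Prod.mk r ⁻¹' L) ^ t ≤
      ν.real (Prod.mk ((1 - t) * s + t * r) ⁻¹' ((1 - t) • K + t • L)) :=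
  (hν (isCompact_section hK s) (convex_section hKc s) (isCompact_section hL r)
    (convex_section hLc r) ht).trans <|
    measureReal_mono (smul_section_add_smul_section_subset _ _ s r)
      (isCompact_section ((hK.smul _).add (hL.smul _)) _).measure_ne_top

theorem IsLogConcaveOnConvex.continuousOn_section [IsFiniteMeasureOnCompacts ν]
    (hν : IsLogConcaveOnConvex ν) (hK : IsCompact K) (hKc : Convex ℝ K) {a b : ℝ}
    (hpos : ∀ s ∈ Ioo a b, 0 < ν.real (Prod.mk s ⁻¹' K)) :
    ContinuousOn (fun s ↦ ν.real (Prod.mk s ⁻¹' K)) (Ioo a b) := by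
  have hlog : ConcaveOn ℝ (Ioo a b) fun s ↦ Real.log (ν.real (Prod.mk s ⁻¹' K)) := by
    refine concaveOn_iff_forall_pos.2 ⟨convex_Ioo a b, fun x hx y hy p q hp hq hpq ↦ ?_⟩
    obtain rfl : p = 1 - q := by linarith
    have hle := hν.section_rpow_mul_section_rpow_le hK hKc hK hKc ⟨hq, by linarith⟩ x y
    rw [← hKc.add_smul hp.le hq.le, hpq, one_smul] at hle
    have hx' := hpos x hx
    have hy' := hpos y hy
    have hle' := Real.log_le_log (by positivity) hle
    rwa [Real.log_mul (by positivity) (by positivity), Real.log_rpow hx',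
      Real.log_rpow hy'] at hle'
  refine (Real.continuous_exp.comp_continuousOn (hlog.continuousOn isOpen_Ioo)).congr
    fun s hs ↦ ?_
  exact (Real.exp_log (hpos s hs)).symm

theorem IsLogConcaveOnConvex.ofReal_fstDensity_rpow_le [IsFiniteMeasureOnCompacts ν]
    (hν : IsLogConcaveOnConvex ν) (hK : IsCompact K) (hKc : Convex ℝ K) (hL : IsCompact L)
    (hLc : Convex ℝ L) {t : ℝ} (ht : t ∈ Ioo (0 : ℝ) 1) (x y : ℝ) :
    ENNReal.ofReal (fstDensity ν K x ^ (1 - t) * fstDensity ν L y ^ t) ≤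
      ENNReal.ofReal (ν.real (Prod.mk ((1 - t) * x + t * y) ⁻¹' ((1 - t) • K + t • L)) /
        ((volume.prod ν).real K ^ (1 - t) * (volume.prod ν).real L ^ t)) := by
  refine ENNReal.ofReal_le_ofReal ?_
  simp only [fstDensity]
  rw [Real.div_rpow measureReal_nonneg measureReal_nonneg,
    Real.div_rpow measureReal_nonneg measureReal_nonneg, div_mul_div_comm]
  gcongr
  exact hν.section_rpow_mul_section_rpow_le hK hKc hL hLc ht x y

variable [BorelSpace F] [FiniteDimensional ℝ F] [ν.IsAddHaarMeasure]

theorem integral_section (hK : IsCompact K) :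
    ∫ s, ν.real (Prod.mk s ⁻¹' K) = (volume.prod ν).real K := by
  rw [measureReal_def, Measure.prod_apply hK.measurableSet]
  exact integral_toReal (measurable_measure_prodMk_left hK.measurableSet).aemeasurable
    (.of_forall fun s ↦ (isCompact_section hK s).measure_lt_top)

theorem IsLogConcaveOnConvex.exists_isPosDensity (hν : IsLogConcaveOnConvex ν)
    (hK : IsCompact K) (hKc : Convex ℝ K) (hK₀ : (volume.prod ν) K ≠ 0) :
    ∃ a b, IsPosDensity (fstDensity ν K) a b ∧
      fstDensity ν K =ᵐ[volume] (Ioo a b).indicator (fstDensity ν K) := by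
  have hint := convex_nonempty_interior_of_measure_ne_zero hKc hK₀
  obtain ⟨a, b, hab, himage⟩ := exists_fst_image_interior_eq_Ioo hK hKc hint
  have hKpos : 0 < (volume.prod ν).real K := ENNReal.toReal_pos hK₀ hK.measure_ne_top
  have hpos : ∀ s ∈ Ioo a b, 0 < ν.real (Prod.mk s ⁻¹' K) := fun s hs ↦
    ENNReal.toReal_pos (measure_section_pos (himage ▸ hs)).ne'
      (isCompact_section hK s).measure_ne_top
  have hzero : (Icc a b).indicator (fstDensity ν K) = fstDensity ν K := by
    refine indicator_eq_self.2 fun s hs ↦ ?_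
    contrapose! hs
    rw [← closure_Ioo hab.ne, ← himage] at hs
    rw [Function.notMem_support, fstDensity, section_eq_empty_of_notMem_closure hKc hint hs,
      measureReal_empty, zero_div]
  have hind : fstDensity ν K =ᵐ[volume] (Ioo a b).indicator (fstDensity ν K) :=
    hzero.symm.eventuallyEq.trans (indicator_ae_eq_of_ae_eq_set Ioo_ae_eq_Icc).symm
  refine ⟨a, b, ⟨hab, (hν.continuousOn_section hK hKc hpos).div_const _,
    fun s hs ↦ div_pos (hpos s hs) hKpos, ?_⟩, hind⟩
  rw [← integral_indicator measurableSet_Ioo, ← integral_congr_ae hind]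
  simp only [fstDensity]
  rw [integral_div, integral_section hK, div_self hKpos.ne']

theorem map_fst_cond (hK : IsCompact K) (hK₀ : (volume.prod ν) K ≠ 0) :
    ((volume.prod ν)[|K]).map Prod.fst =
      volume.withDensity fun s ↦ ENNReal.ofReal (fstDensity ν K s) := by
  ext A hA
  have hA' : MeasurableSet (Prod.fst ⁻¹' A : Set (ℝ × F)) := measurable_fst hA
  have hsection (s : ℝ) : ν (Prod.mk s ⁻¹' (K ∩ Prod.fst ⁻¹' A)) =
      A.indicator (fun s ↦ ν (Prod.mk s ⁻¹' K)) s := by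
    by_cases hs : s ∈ A <;> simp [hs, preimage_preimage]
  rw [Measure.map_apply measurable_fst hA, ProbabilityTheory.cond_apply hK.measurableSet,
    Measure.prod_apply (hK.measurableSet.inter hA'), withDensity_apply _ hA]
  simp only [ofReal_fstDensity hK hK₀, hsection]
  rw [lintegral_indicator hA,
    lintegral_const_mul _ (measurable_measure_prodMk_left hK.measurableSet)]

theorem lintegral_ofReal_section_div (hK : IsCompact K) {C : ℝ} (hC : 0 < C) :
    ∫⁻ s, ENNReal.ofReal (ν.real (Prod.mk s ⁻¹' K) / C) =
      ENNReal.ofReal ((volume.prod ν).real K / C) := by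
  have hsection (s : ℝ) : ENNReal.ofReal (ν.real (Prod.mk s ⁻¹' K)) = ν (Prod.mk s ⁻¹' K) :=
    ofReal_measureReal (isCompact_section hK s).measure_ne_top
  simp only [ENNReal.ofReal_div_of_pos hC, hsection, ENNReal.div_eq_inv_mul]
  rw [lintegral_const_mul _ (measurable_measure_prodMk_left hK.measurableSet),
    ← Measure.prod_apply hK.measurableSet, ofReal_measureReal hK.measure_ne_top]

theorem IsLogConcaveOnConvex.volume_prod (hν : IsLogConcaveOnConvex ν) :
    IsLogConcaveOnConvex ((volume : Measure ℝ).prod ν) := by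
  intro K L hK hKc hL hLc t ht
  by_cases hK₀ : (volume.prod ν) K = 0
  · rw [measureReal_def, hK₀, ENNReal.toReal_zero, Real.zero_rpow (sub_pos.2 ht.2).ne', zero_mul]
    exact measureReal_nonneg
  by_cases hL₀ : (volume.prod ν) L = 0
  · rw [measureReal_def (s := L), hL₀, ENNReal.toReal_zero, Real.zero_rpow ht.1.ne', mul_zero]
    exact measureReal_nonneg
  have hKpos : 0 < (volume.prod ν).real K := ENNReal.toReal_pos hK₀ hK.measure_ne_top
  have hLpos : 0 < (volume.prod ν).real L := ENNReal.toReal_pos hL₀ hL.measure_ne_top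
  obtain ⟨a, b, hf, -⟩ := hν.exists_isPosDensity hK hKc hK₀
  obtain ⟨c, d, hg, -⟩ := hν.exists_isPosDensity hL hLc hL₀
  have hle := hf.one_le_lintegral_of_rpow_mul_rpow_le hg ht
    (h := fun z ↦ ENNReal.ofReal (ν.real (Prod.mk z ⁻¹' _) / _)) fun x _ y _ ↦
    hν.ofReal_fstDensity_rpow_le hK hKc hL hLc ht x y
  rwa [lintegral_ofReal_section_div ((hK.smul _).add (hL.smul _)) (by positivity),
    ENNReal.one_le_ofReal, one_le_div (by positivity)] at hle

theorem IsLogConcaveOnConvex.exists_map_fst_cond_eq (hν : IsLogConcaveOnConvex ν)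
    (hK : IsCompact K) (hKc : Convex ℝ K) (hK₀ : (volume.prod ν) K ≠ 0)
    (hL : IsCompact L) (hLc : Convex ℝ L) (hL₀ : (volume.prod ν) L ≠ 0)
    {t : ℝ} (ht : t ∈ Ioo (0 : ℝ) 1)
    (hle : (volume.prod ν).real ((1 - t) • K + t • L) ≤
      (volume.prod ν).real K ^ (1 - t) * (volume.prod ν).real L ^ t) :
    ∃ e, ((volume.prod ν)[|L]).map Prod.fst =
      (((volume.prod ν)[|K]).map Prod.fst).map (· + e) := by
  have hKpos : 0 < (volume.prod ν).real K := ENNReal.toReal_pos hK₀ hK.measure_ne_top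
  have hLpos : 0 < (volume.prod ν).real L := ENNReal.toReal_pos hL₀ hL.measure_ne_top
  obtain ⟨a, b, hf, hf'⟩ := hν.exists_isPosDensity hK hKc hK₀
  obtain ⟨c, d, hg, hg'⟩ := hν.exists_isPosDensity hL hLc hL₀
  obtain ⟨e, himage, hfg⟩ := hf.exists_translate_of_lintegral_le_one hg ht
    (h := fun z ↦ ENNReal.ofReal (ν.real (Prod.mk z ⁻¹' _) / _))
    (fun x _ y _ ↦ hν.ofReal_fstDensity_rpow_le hK hKc hL hLc ht x y) (by
      rw [lintegral_ofReal_section_div ((hK.smul _).add (hL.smul _)) (by positivity),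
        ENNReal.ofReal_le_one]
      exact div_le_one_of_le₀ hle (by positivity))
  have htranslate : fstDensity ν K =ᵐ[volume] fun s ↦ fstDensity ν L (s + e) := by
    have hg'' := (measurePreserving_add_right volume e).quasiMeasurePreserving.ae_eq_comp hg'
    filter_upwards [hf', hg''] with s hs hs'
    calc fstDensity ν K s = (Ioo a b).indicator (fstDensity ν K) s := hs
      _ = (Ioo a b).indicator (fstDensity ν L ∘ (· + e)) s :=
          congrFun (indicator_congr fun x hx ↦ (hfg x hx).symm) s
      _ = ((· + e) '' Ioo a b).indicator (fstDensity ν L) (s + e) :=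
          (indicator_image (add_left_injective e)).symm
      _ = fstDensity ν L (s + e) := by rw [himage]; exact hs'.symm
  refine ⟨e, ?_⟩
  rw [map_fst_cond hK hK₀, map_fst_cond hL hL₀, ← map_withDensity_comp
    (measurePreserving_add_right volume e) (measurableEmbedding_addRight e)]
  congr 1
  refine withDensity_congr_ae (htranslate.symm.mono fun s hs ↦ ?_)
  exact congrArg ENNReal.ofReal hs

end Sections

section BrunnMinkowski

open scoped ProbabilityTheory

universe u

theorem map_cond_of_measurePreserving {X Y : Type*} [MeasurableSpace X] [MeasurableSpace Y]
    {μ : Measure X} {ρ : Measure Y} {φ : X → Y} (hφ : MeasurePreserving φ μ ρ)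
    (hφ' : MeasurableEmbedding φ) (s : Set X) : (μ[|s]).map φ = ρ[|φ '' s] := by
  rw [ProbabilityTheory.cond, ProbabilityTheory.cond, Measure.map_smul,
    (hφ.restrict_image_emb hφ' s).map_eq, ← hφ.measure_preimage_emb hφ',
    hφ'.injective.preimage_image]

variable {E : Type u} [NormedAddCommGroup E] [NormedSpace ℝ E] [MeasurableSpace E]

theorem isLogConcaveOnConvex_of_subsingleton [Subsingleton E] (μ : Measure E) :
    IsLogConcaveOnConvex μ := by
  intro K L _ _ _ _ t ht
  have ht' : 0 < 1 - t := sub_pos.2 ht.2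
  obtain rfl | hK := K.eq_empty_or_nonempty
  · simp [Real.zero_rpow ht'.ne']
  obtain rfl | hL := L.eq_empty_or_nonempty
  · simp [Real.zero_rpow ht.1.ne']
  rw [((hK.smul_set (a := 1 - t)).add (hL.smul_set (a := t))).eq_univ, hK.eq_univ, hL.eq_univ,
    ← Real.rpow_add' measureReal_nonneg (by simp), sub_add_cancel, Real.rpow_one]

variable [BorelSpace E]

theorem IsLogConcaveOnConvex.of_measurePreserving {F : Type*} [NormedAddCommGroup F]
    [NormedSpace ℝ F] [MeasurableSpace F] [BorelSpace F] {μ : Measure E} {ρ : Measure F}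
    {Φ : E ≃L[ℝ] F} (hρ : IsLogConcaveOnConvex ρ) (hΦ : MeasurePreserving Φ μ ρ) :
    IsLogConcaveOnConvex μ := by
  have hreal (K : Set E) : ρ.real (Φ '' K) = μ.real K := by
    rw [measureReal_def, ← hΦ.measure_preimage_emb Φ.toHomeomorph.measurableEmbedding,
      Φ.injective.preimage_image, measureReal_def]
  intro K L hK hKc hL hLc t ht
  have hle := hρ (hK.image Φ.continuous) (hKc.linear_image Φ.toLinearMap)
    (hL.image Φ.continuous) (hLc.linear_image Φ.toLinearMap) ht
  rwa [← image_smul_set, ← image_smul_set, ← image_add, hreal, hreal, hreal] at hle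

variable [FiniteDimensional ℝ E] (μ : Measure E) [μ.IsAddHaarMeasure]

theorem exists_measurePreserving_prod_ker {ℓ : StrongDual ℝ E} (hℓ : ℓ ≠ 0) :
    ∃ (ν : Measure ℓ.ker) (_ : ν.IsAddHaarMeasure) (Φ : E ≃L[ℝ] ℝ × ℓ.ker),
      MeasurePreserving Φ μ (volume.prod ν) ∧ ∀ x, (Φ x).1 = ℓ x := by
  obtain ⟨v, hv⟩ := LinearMap.surjective (f := ℓ.toLinearMap) (by exact_mod_cast hℓ) 1
  let R : ℝ →L[ℝ] E := ContinuousLinearMap.toSpanSingleton ℝ v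
  have hR : Function.RightInverse R ℓ := fun s ↦ by
    rw [ContinuousLinearMap.toSpanSingleton_apply, map_smul]
    exact (congrArg (s • ·) hv).trans (mul_one s)
  let Φ : E ≃L[ℝ] ℝ × ℓ.ker := ContinuousLinearEquiv.equivOfRightInverse ℓ R hR
  let ν : Measure ℓ.ker := Measure.addHaar
  have : (μ.map Φ).IsAddHaarMeasure := Φ.isAddHaarMeasure_map μ
  let c := (μ.map Φ).addHaarScalarFactor (volume.prod ν)
  have hc : c ≠ 0 := (Measure.addHaarScalarFactor_pos_of_isAddHaarMeasure _ _).ne'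
  refine ⟨c • ν, .nnreal_smul ν hc, Φ, ⟨Φ.continuous.measurable, ?_⟩, fun x ↦ rfl⟩
  rw [Measure.isAddLeftInvariant_eq_smul (μ.map Φ) (volume.prod ν)]
  exact (Measure.prod_smul_right c).symm

theorem isLogConcaveOnConvex_of_isAddHaarMeasure : IsLogConcaveOnConvex μ := by
  induction hd : Module.finrank ℝ E generalizing E with
  | zero =>
    have := Module.finrank_zero_iff.1 hd
    exact isLogConcaveOnConvex_of_subsingleton μ
  | succ d ih =>
    have : Nontrivial E := Module.nontrivial_of_finrank_eq_succ hd
    obtain ⟨ℓ, hℓ⟩ := exists_ne (0 : StrongDual ℝ E)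
    obtain ⟨ν, _, Φ, hΦ, -⟩ := exists_measurePreserving_prod_ker μ hℓ
    have hker : Module.finrank ℝ ℓ.ker = d := by
      have hfinrank := Φ.toLinearEquiv.finrank_eq
      rw [hd, Module.finrank_prod, Module.finrank_self, add_comm] at hfinrank
      exact (Nat.add_left_cancel hfinrank).symm
    exact (ih ν hker).volume_prod.of_measurePreserving hΦ

variable {μ} {K L : Set E} {t : ℝ}

theorem exists_map_cond_eq_map_add_const (hK : IsCompact K) (hKc : Convex ℝ K) (hK₀ : μ K ≠ 0)
    (hL : IsCompact L) (hLc : Convex ℝ L) (hL₀ : μ L ≠ 0) (ht : t ∈ Ioo (0 : ℝ) 1)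
    (hle : μ.real ((1 - t) • K + t • L) ≤ μ.real K ^ (1 - t) * μ.real L ^ t)
    (ℓ : StrongDual ℝ E) : ∃ e, (μ[|L]).map ℓ = ((μ[|K]).map ℓ).map (· + e) := by
  obtain rfl | hℓ := eq_or_ne ℓ 0
  · have := ProbabilityTheory.cond_isProbabilityMeasure_of_finite hK₀ hK.measure_ne_top
    have := ProbabilityTheory.cond_isProbabilityMeasure_of_finite hL₀ hL.measure_ne_top
    have hzero : ⇑(0 : StrongDual ℝ E) = fun _ ↦ 0 := rfl
    refine ⟨0, ?_⟩
    simp only [hzero, add_zero, Measure.map_const, measure_univ, one_smul, Measure.map_id']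
  obtain ⟨ν, _, Φ, hΦ, hfst⟩ := exists_measurePreserving_prod_ker μ hℓ
  have hemb := Φ.toHomeomorph.measurableEmbedding
  have hmeas (M : Set E) : (volume.prod ν) (Φ '' M) = μ M := by
    rw [← hΦ.measure_preimage_emb hemb, Φ.injective.preimage_image]
  have hcond (M : Set E) : (μ[|M]).map ℓ = ((volume.prod ν)[|Φ '' M]).map Prod.fst := by
    rw [← map_cond_of_measurePreserving hΦ hemb,
      Measure.map_map measurable_fst hΦ.measurable]
    exact congrArg (fun f ↦ (μ[|M]).map f) (funext fun x ↦ (hfst x).symm)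
  rw [hcond, hcond]
  refine (isLogConcaveOnConvex_of_isAddHaarMeasure ν).exists_map_fst_cond_eq
    (hK.image Φ.continuous) (hKc.linear_image Φ.toLinearMap) (by rwa [hmeas])
    (hL.image Φ.continuous) (hLc.linear_image Φ.toLinearMap) (by rwa [hmeas]) ht ?_
  simpa only [← image_smul_set, ← image_add, measureReal_def, hmeas] using hle

end BrunnMinkowski

section CramerWold

variable {E : Type*} [NormedAddCommGroup E] [NormedSpace ℝ E] [MeasurableSpace E] [BorelSpace E]
  [CompleteSpace E] [SecondCountableTopology E] {P Q : Measure E}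

theorem exists_eq_map_add_const_of_forall_dual [IsProbabilityMeasure P]
    [IsProbabilityMeasure Q] (hP : Integrable (fun x ↦ x) P)
    (hQ : Integrable (fun x ↦ x) Q)
    (h : ∀ ℓ : StrongDual ℝ E, ∃ e, Q.map ℓ = (P.map ℓ).map (· + e)) :
    ∃ v, Q = P.map (· + v) := by
  have hmean (ℓ : StrongDual ℝ E) {e : ℝ} (he : Q.map ℓ = (P.map ℓ).map (· + e)) :
      e = ℓ (∫ x, x ∂Q - ∫ x, x ∂P) := by
    have hQP : ∫ x, ℓ x ∂Q = ∫ x, (ℓ x + e) ∂P := by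
      calc ∫ x, ℓ x ∂Q = ∫ y, y ∂(Q.map ℓ) :=
            (integral_map (by fun_prop) aestronglyMeasurable_id).symm
        _ = ∫ y, y ∂(P.map ((· + e) ∘ ℓ)) := by
          rw [he, Measure.map_map (by fun_prop) (by fun_prop)]
        _ = ∫ x, (ℓ x + e) ∂P := integral_map (by fun_prop) aestronglyMeasurable_id
    have hℓP : Integrable (fun x ↦ ℓ x) P := ℓ.integrable_comp hP
    rw [integral_add hℓP (integrable_const e), integral_const, probReal_univ,
      one_smul] at hQP
    rw [map_sub, ← ℓ.integral_comp_comm hQ, ← ℓ.integral_comp_comm hP]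
    exact eq_sub_of_add_eq' hQP.symm
  refine ⟨∫ x, x ∂Q - ∫ x, x ∂P, Measure.ext_of_charFunDual (funext fun ℓ ↦ ?_)⟩
  obtain ⟨e, he⟩ := h ℓ
  rw [charFunDual_eq_charFun_map_one, charFunDual_eq_charFun_map_one, he,
    Measure.map_map (by fun_prop) (by fun_prop), Measure.map_map (by fun_prop) (by fun_prop)]
  congr 2
  ext x
  simp only [Function.comp_apply, map_add, hmean ℓ he]

end CramerWold

section Equality

open scoped ProbabilityTheory

variable {E : Type*} [NormedAddCommGroup E] [NormedSpace ℝ E] [MeasurableSpace E] [BorelSpace E]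
  [FiniteDimensional ℝ E] {μ : Measure E} [μ.IsAddHaarMeasure] {K L : Set E} {t : ℝ}

theorem convex_subset_of_cond_eq (hK : IsCompact K) (hKc : Convex ℝ K) (hK₀ : μ K ≠ 0)
    (hL : IsClosed L) (h : μ[|K] = μ[|L]) : K ⊆ L := by
  refine convex_subset_of_measure_diff_eq_zero hKc hK₀ hL ?_
  have hnull : μ[|K] Lᶜ = 0 := by
    rw [h, ProbabilityTheory.cond_apply hL.measurableSet, inter_compl_self, measure_empty,
      mul_zero]
  rw [ProbabilityTheory.cond_apply hK.measurableSet] at hnull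
  exact (mul_eq_zero.1 hnull).resolve_left (ENNReal.inv_ne_zero.2 hK.measure_ne_top)

theorem convex_eq_of_cond_eq (hK : IsCompact K) (hKc : Convex ℝ K) (hK₀ : μ K ≠ 0)
    (hL : IsCompact L) (hLc : Convex ℝ L) (hL₀ : μ L ≠ 0) (h : μ[|K] = μ[|L]) : K = L :=
  (convex_subset_of_cond_eq hK hKc hK₀ hL.isClosed h).antisymm
    (convex_subset_of_cond_eq hL hLc hL₀ hK.isClosed h.symm)

theorem exists_eq_vadd_of_measureReal_add_le (hK : IsCompact K) (hKc : Convex ℝ K)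
    (hK₀ : μ K ≠ 0) (hL : IsCompact L) (hLc : Convex ℝ L) (hL₀ : μ L ≠ 0)
    (ht : t ∈ Ioo (0 : ℝ) 1)
    (hle : μ.real ((1 - t) • K + t • L) ≤ μ.real K ^ (1 - t) * μ.real L ^ t) :
    ∃ v : E, L = v +ᵥ K := by
  have := ProbabilityTheory.cond_isProbabilityMeasure_of_finite hK₀ hK.measure_ne_top
  have := ProbabilityTheory.cond_isProbabilityMeasure_of_finite hL₀ hL.measure_ne_top
  have hintegrable {M : Set E} (hM : IsCompact M) (hM₀ : μ M ≠ 0) :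
      Integrable (fun x ↦ x) (μ[|M]) :=
    ((continuousOn_id' M).integrableOn_compact hM).smul_measure (ENNReal.inv_ne_top.2 hM₀)
  obtain ⟨v, hv⟩ := exists_eq_map_add_const_of_forall_dual (hintegrable hK hK₀)
    (hintegrable hL hL₀)
    (exists_map_cond_eq_map_add_const hK hKc hK₀ hL hLc hL₀ ht hle)
  have himage : (· + v) '' K = v +ᵥ K := by
    rw [← image_vadd]
    exact image_congr fun x _ ↦ add_comm x v
  rw [map_cond_of_measurePreserving (measurePreserving_add_right μ v)
    (measurableEmbedding_addRight v), himage] at hv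
  refine ⟨v, convex_eq_of_cond_eq hL hLc hL₀ (hK.vadd v) (hKc.vadd v) ?_ hv⟩
  rwa [measure_vadd]

end Equality

section VolumeRadius

variable {E : Type*} [NormedAddCommGroup E] [NormedSpace ℝ E] [MeasurableSpace E]
  {μ : Measure E} {K L N : Set E} {t : ℝ}

/-- The `d`-th root of the measure of `K`, where `d` is the dimension of the ambient space. It is
positively homogeneous in `K`, which puts the Brunn–Minkowski inequality in its additive form. -/
noncomputable def volumeRadius (μ : Measure E) (K : Set E) : ℝ :=
  μ.real K ^ (1 / (Module.finrank ℝ E : ℝ))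

theorem volumeRadius_mono (hKL : K ⊆ L) (hL : μ L ≠ ⊤) : volumeRadius μ K ≤ volumeRadius μ L :=
  Real.rpow_le_rpow measureReal_nonneg (measureReal_mono hKL hL) (by positivity)

theorem volumeRadius_nonneg (K : Set E) : 0 ≤ volumeRadius μ K :=
  Real.rpow_nonneg measureReal_nonneg _

theorem volumeRadius_pos (hK : 0 < μ.real K) : 0 < volumeRadius μ K :=
  Real.rpow_pos_of_pos hK _

theorem volumeRadius_pow_finrank [FiniteDimensional ℝ E] [Nontrivial E] (μ : Measure E)
    (K : Set E) : volumeRadius μ K ^ Module.finrank ℝ E = μ.real K := by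
  rw [volumeRadius, one_div, Real.rpow_inv_natCast_pow measureReal_nonneg Module.finrank_pos.ne']

variable [BorelSpace E] [FiniteDimensional ℝ E] [μ.IsAddHaarMeasure]

theorem volumeRadius_vadd (v : E) (K : Set E) : volumeRadius μ (v +ᵥ K) = volumeRadius μ K := by
  rw [volumeRadius, measureReal_def, measure_vadd, ← measureReal_def, volumeRadius]

variable [Nontrivial E]

theorem volumeRadius_smul {c : ℝ} (hc : 0 ≤ c) (K : Set E) :
    volumeRadius μ (c • K) = c * volumeRadius μ K := by
  rw [volumeRadius, measureReal_def, μ.addHaar_smul_of_nonneg hc, ENNReal.toReal_mul,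
    ENNReal.toReal_ofReal (by positivity), Real.mul_rpow (by positivity) ENNReal.toReal_nonneg,
    one_div, Real.pow_rpow_inv_natCast hc Module.finrank_pos.ne', volumeRadius, one_div,
    measureReal_def]

theorem measureReal_inv_volumeRadius_smul (hK : 0 < μ.real K) :
    μ.real ((volumeRadius μ K)⁻¹ • K) = 1 := by
  have h := volumeRadius_smul (μ := μ) (inv_nonneg.2 (volumeRadius_pos hK).le) K
  rw [inv_mul_cancel₀ (volumeRadius_pos hK).ne'] at h
  rw [← volumeRadius_pow_finrank, h, one_pow]

theorem isHomothetic_of_volumeRadius_add_le (hK : IsCompact K) (hKc : Convex ℝ K)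
    (hKpos : 0 < μ.real K) (hL : IsCompact L) (hLc : Convex ℝ L) (hLpos : 0 < μ.real L)
    (ht : t ∈ Ioo (0 : ℝ) 1)
    (hle : volumeRadius μ ((1 - t) • K + t • L) ≤
      (1 - t) * volumeRadius μ K + t * volumeRadius μ L) :
    IsHomothetic K L := by
  have ht₀ : 0 < t := ht.1
  have ht₁ : 0 < 1 - t := sub_pos.2 ht.2
  have hK₁ := measureReal_inv_volumeRadius_smul hKpos
  have hL₁ := measureReal_inv_volumeRadius_smul hLpos
  have hr₀ := volumeRadius_pos hKpos
  have hr₁ := volumeRadius_pos hLpos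
  set r₀ := volumeRadius μ K
  set r₁ := volumeRadius μ L
  set r := (1 - t) * r₀ + t * r₁ with hr
  have hrpos : 0 < r := by positivity
  -- The weight with which `r₁⁻¹ L` enters `r⁻¹ ((1 - t) K + t L)` as a convex combination of the
  -- bodies `r₀⁻¹ K` and `r₁⁻¹ L`, which have measure `1`.
  set s := t * r₁ / r with hs
  have hs' : 1 - s = (1 - t) * r₀ / r := by rw [hs, hr]; field_simp; ring
  have hsmem : s ∈ Ioo (0 : ℝ) 1 := ⟨by positivity, sub_pos.1 (hs' ▸ by positivity)⟩
  have hcomb : (1 - s) • r₀⁻¹ • K + s • r₁⁻¹ • L = r⁻¹ • ((1 - t) • K + t • L) := by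
    rw [smul_add, smul_smul, smul_smul, smul_smul, smul_smul, hs', hs]
    congr 2 <;> field_simp
  have hle₁ : μ.real ((1 - s) • r₀⁻¹ • K + s • r₁⁻¹ • L) ≤ 1 := by
    rw [← volumeRadius_pow_finrank, hcomb, volumeRadius_smul (inv_pos.2 hrpos).le]
    exact pow_le_one₀ (mul_nonneg (inv_pos.2 hrpos).le (volumeRadius_nonneg _))
      ((inv_mul_le_one₀ hrpos).2 hle)
  have hpos {M : Set E} (hM : μ.real M = 1) : μ M ≠ 0 := fun h ↦
    one_ne_zero (hM.symm.trans (by rw [measureReal_def, h, ENNReal.toReal_zero]))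
  obtain ⟨v, hv⟩ := exists_eq_vadd_of_measureReal_add_le (hK.smul r₀⁻¹) (hKc.smul r₀⁻¹)
    (hpos hK₁) (hL.smul r₁⁻¹) (hLc.smul r₁⁻¹) (hpos hL₁) hsmem
    (by rwa [hK₁, hL₁, Real.one_rpow, Real.one_rpow, one_mul])
  exact (isHomothetic_smul K (inv_pos.2 hr₀)).trans <| (isHomothetic_vadd _ v).trans <|
    hv ▸ (isHomothetic_smul L (inv_pos.2 hr₁)).symm

theorem volumeRadius_smul_add_smul_eq (hK : Convex ℝ K) (hKL : IsHomothetic K L) {p q : ℝ}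
    (hp : 0 ≤ p) (hq : 0 ≤ q) :
    volumeRadius μ (p • K + q • L) = p * volumeRadius μ K + q * volumeRadius μ L := by
  obtain ⟨c, hc, v, rfl⟩ := hKL
  rw [smul_add_smul_vadd_smul hK hp hq hc.le, volumeRadius_vadd, volumeRadius_vadd,
    volumeRadius_smul (by positivity), volumeRadius_smul hc.le]
  ring

theorem isHomothetic_and_isHomothetic_of_volumeRadius_eq (hK : IsCompact K) (hKc : Convex ℝ K)
    (hKpos : 0 < μ.real K) (hL : IsCompact L) (hLc : Convex ℝ L) (hLpos : 0 < μ.real L)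
    (hNc : Convex ℝ N) (ht : t ∈ Ioo (0 : ℝ) 1) (hsub : (1 - t) • K + t • L ⊆ N)
    (heq : volumeRadius μ N = (1 - t) * volumeRadius μ K + t * volumeRadius μ L) :
    IsHomothetic K L ∧ IsHomothetic K N := by
  have ht₀ : 0 < t := ht.1
  have ht₁ : 0 < 1 - t := sub_pos.2 ht.2
  have hNpos : 0 < μ.real N := by
    have := volumeRadius_pos hKpos
    have := volumeRadius_pos hLpos
    rw [← volumeRadius_pow_finrank, heq]
    positivity
  obtain ⟨hN₀, hN⟩ := ENNReal.toReal_pos_iff.1 hNpos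
  have hKL : IsHomothetic K L := isHomothetic_of_volumeRadius_add_le hK hKc hKpos hL hLc hLpos ht
    (heq ▸ volumeRadius_mono hsub hN.ne)
  have hM : IsCompact ((1 - t) • K + t • L) := (hK.smul _).add (hL.smul _)
  have hreal : μ.real N = μ.real ((1 - t) • K + t • L) := by
    rw [← volumeRadius_pow_finrank, ← volumeRadius_pow_finrank μ ((1 - t) • K + t • L), heq,
      volumeRadius_smul_add_smul_eq hKc hKL ht₁.le ht₀.le]
  have hMN : (1 - t) • K + t • L = N :=
    convex_eq_of_subset_of_measure_le hNc hN₀.ne' hN.ne hM.isClosed hsub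
      ((ENNReal.toReal_le_toReal hN.ne hM.measure_ne_top).1 hreal.le)
  exact ⟨hKL, hMN ▸ hKL.smul_add_smul hKc ht₁ ht₀⟩

end VolumeRadius

section CrossCovariogram

variable {E : Type*} [NormedAddCommGroup E] [NormedSpace ℝ E] {K L : Set E}

theorem inter_vadd_combination_subset (hK : Convex ℝ K) (hL : Convex ℝ L) (x₀ x₁ : E) {p q : ℝ}
    (hp : 0 ≤ p) (hq : 0 ≤ q) (hpq : p + q = 1) :
    p • (K ∩ (x₀ +ᵥ L)) + q • (K ∩ (x₁ +ᵥ L)) ⊆ K ∩ ((p • x₀ + q • x₁) +ᵥ L) := by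
  rintro _ ⟨_, ⟨y, ⟨hyK, l, hl, rfl⟩, rfl⟩, _, ⟨z, ⟨hzK, m, hm, rfl⟩, rfl⟩, rfl⟩
  refine ⟨hK hyK hzK hp hq hpq, p • l + q • m, hL hl hm hp hq hpq, ?_⟩
  simp only [vadd_eq_add, smul_add]
  abel

variable [MeasurableSpace E] {μ : Measure E}

/-- The function `g_{K,L}` of the paper for the measure `μ`; it vanishes where the intersection
has infinite measure. -/
noncomputable def crossCovariogram (μ : Measure E) (K L : Set E) (x : E) : ℝ :=
  μ.real (K ∩ (x +ᵥ L))

variable [BorelSpace E] [FiniteDimensional ℝ E] [μ.IsAddHaarMeasure]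

theorem isCompact_inter_vadd_of_crossCovariogram_pos (hK : IsClosed K) (hKc : Convex ℝ K)
    (hL : IsClosed L) (hLc : Convex ℝ L) {x : E} (hx : 0 < crossCovariogram μ K L x) :
    IsCompact (K ∩ (x +ᵥ L)) := by
  obtain ⟨h₀, h⟩ := ENNReal.toReal_pos_iff.1 hx
  have hclosed : IsClosed (K ∩ (x +ᵥ L)) := hK.inter (hL.vadd x)
  exact Metric.isCompact_of_isClosed_isBounded hclosed
    (convex_isBounded_of_measure_ne_top (hKc.inter (hLc.vadd x)) hclosed h₀.ne' h.ne)

variable [Nontrivial E]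

theorem covariogram_equality_homothetic_general (hK : IsClosed K) (hKc : Convex ℝ K)
    (hL : IsClosed L) (hLc : Convex ℝ L) {t : ℝ} (ht : t ∈ Ioo (0 : ℝ) 1) {x₀ x₁ : E}
    (h₀ : 0 < crossCovariogram μ K L x₀) (h₁ : 0 < crossCovariogram μ K L x₁)
    (heq : crossCovariogram μ K L ((1 - t) • x₀ + t • x₁) ^ (1 / (Module.finrank ℝ E : ℝ)) =
      (1 - t) * crossCovariogram μ K L x₀ ^ (1 / (Module.finrank ℝ E : ℝ)) +
        t * crossCovariogram μ K L x₁ ^ (1 / (Module.finrank ℝ E : ℝ))) :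
    IsHomothetic (K ∩ (x₀ +ᵥ L)) (K ∩ (x₁ +ᵥ L)) ∧
      IsHomothetic (K ∩ (x₀ +ᵥ L)) (K ∩ (((1 - t) • x₀ + t • x₁) +ᵥ L)) ∧
      IsHomothetic (K ∩ (x₁ +ᵥ L)) (K ∩ (((1 - t) • x₀ + t • x₁) +ᵥ L)) := by
  obtain ⟨h₀₁, h₀ₜ⟩ := isHomothetic_and_isHomothetic_of_volumeRadius_eq
    (isCompact_inter_vadd_of_crossCovariogram_pos hK hKc hL hLc h₀) (hKc.inter (hLc.vadd x₀)) h₀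
    (isCompact_inter_vadd_of_crossCovariogram_pos hK hKc hL hLc h₁) (hKc.inter (hLc.vadd x₁)) h₁
    (hKc.inter (hLc.vadd _)) ht
    (inter_vadd_combination_subset hKc hLc x₀ x₁ (sub_nonneg.2 ht.2.le) ht.1.le
      (sub_add_cancel 1 t)) heq
  exact ⟨h₀₁, h₀ₜ, h₀₁.symm.trans h₀ₜ⟩

end CrossCovariogram

/-- Lemma 2.2 (Equality conditions): if equality holds in the `1/n`-concavity inequality of
the cross covariogram at some `t ∈ (0,1)` with `g(x₀), g(x₁) > 0`, then
`K ∩ (L + x₀)`, `K ∩ (L + x₁)` and `K ∩ (L + x_t)` are pairwise homothetic. -/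
theorem covariogram_equality_homothetic
    (n : ℕ) (hn : 1 < n)
    (K L : Set (EuclideanSpace ℝ (Fin n)))
    (hKne : K.Nonempty) (hKclosed : IsClosed K) (hKconv : Convex ℝ K)
    (hLne : L.Nonempty) (hLclosed : IsClosed L) (hLconv : Convex ℝ L)
    (g : EuclideanSpace ℝ (Fin n) → ℝ)
    (hg : ∀ x, g x = (volume (K ∩ (x +ᵥ L))).toReal)
    (a : EuclideanSpace ℝ (Fin n))
    (hpos : 0 < volume (K ∩ (a +ᵥ L)))
    (hfin : volume (K ∩ (a +ᵥ L)) < ⊤)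
    (t : ℝ) (ht : t ∈ Ioo (0 : ℝ) 1)
    (x₀ x₁ : EuclideanSpace ℝ (Fin n)) (hne : x₀ ≠ x₁)
    (h₀ : 0 < g x₀) (h₁ : 0 < g x₁)
    (heq : g ((1 - t) • x₀ + t • x₁) ^ (1 / (n : ℝ))
      = (1 - t) * g x₀ ^ (1 / (n : ℝ)) + t * g x₁ ^ (1 / (n : ℝ))) :
    Homothetic (K ∩ (x₀ +ᵥ L)) (K ∩ (x₁ +ᵥ L)) ∧
    Homothetic (K ∩ (x₀ +ᵥ L)) (K ∩ (((1 - t) • x₀ + t • x₁) +ᵥ L)) ∧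
    Homothetic (K ∩ (x₁ +ᵥ L)) (K ∩ (((1 - t) • x₀ + t • x₁) +ᵥ L)) := by
  have : NeZero n := ⟨by lia⟩
  obtain rfl : g = crossCovariogram volume K L := funext hg
  exact covariogram_equality_homothetic_general hKclosed hKconv hLclosed hLconv ht h₀ h₁
    (by rwa [finrank_euclideanSpace_fin])
end
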